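/- Let 0 < α < 1, let A be a real s×s matrix all of whose (complex) eigenvalues λ satisfy λ ≠ 0 and |arg λ| > απ/2, let Q : [0,∞) → ℝ^{s×s} be continuous with lim_{t→∞} ‖Q(t)‖ = 0, and let g : [0,∞) → ℝ^s be continuous with sup_{t≥0} t^{1-α} ∫₀^t (t-τ)^{α-1} ‖E_{α,α}((t-τ)^α A) g(τ)‖ dτ < ∞. Then for every x₀ ∈ ℝ^s there is a unique φ ∈ C⁰_{1-α}([0,∞), ℝ^s) satisfying φ(t) = t^{α-1} E_{α,α}(t^α A) x₀ + ∫₀^t (t-τ)^{α-1} E_{α,α}((t-τ)^α A) Q(τ) φ(τ) dτ + ∫₀^t (t-τ)^{α-1} E_{α,α}((t-τ)^α A) g(τ) dτ for all t > 0; in particular lim_{t→∞} φ(t) = 0. -/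

import Mathlib

open Filter Topology MeasureTheory

attribute [local instance] Matrix.linftyOpNormedAddCommGroup Matrix.linftyOpNormedRing

/-- The matrix Mittag-Leffler function `E_{α,β}(B) = ∑ Bᵏ / Γ(αk + β)`. -/
noncomputable def ML {s : ℕ} (α β : ℝ) (B : Matrix (Fin s) (Fin s) ℝ) :
    Matrix (Fin s) (Fin s) ℝ :=
  ∑' k : ℕ, (Real.Gamma (α * k + β))⁻¹ • B ^ k

/-- Membership in `C⁰_{1-α}([0,∞), ℝ^s)`: continuous on `(0,∞)`, the limit
`lim_{t→0⁺} t^{1-α} x(t)` exists, and `sup_{t≥0} t^{1-α} ‖x(t)‖ < ∞`. -/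
def memC0inf (α : ℝ) {s : ℕ} (x : ℝ → (Fin s → ℝ)) : Prop :=
  ContinuousOn x (Set.Ioi 0) ∧
  (∃ l : Fin s → ℝ, Tendsto (fun t : ℝ => t ^ (1 - α) • x t) (𝓝[>] 0) (𝓝 l)) ∧
  (∃ C : ℝ, ∀ t : ℝ, 0 ≤ t → t ^ (1 - α) * ‖x t‖ ≤ C)

/-!
For `re z` large, `(z ^ α - A)⁻¹` is the Laplace transform of `t ^ (α - 1) E_{α,α}(t ^ α A)`. The
spectral condition keeps `z ^ α` away from the spectrum of `A` on the whole right half-plane, with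
uniform resolvent bounds, so the second derivative of the transform is `O(|z| ^ (α - 2))` there.
Inverting it along the line `re z = 1 / t`, on which this power is integrable, bounds
`t ^ (1 + α) E_{α,α}(t ^ α A)` by a multiple of `t ^ (1 - α)`, whence
`‖E_{α,α}(t ^ α A)‖ ≤ C / (1 + t ^ α) ^ 2`.

With `z t = t ^ (1 - α) φ t` and `τ = t u` the integral equation becomes `z = h + L z` on the
bounded continuous functions on `[0, ∞)`, where `L` is bounded because of the quadratic decay of
the kernel. In the equivalent norm weighted by `exp (-γ min t T)` the operator `L` is a
`1/2`-contraction: beyond `T` because `Q` is small there, before `T` because `γ` is large. Hence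
`1 - L` is invertible, and boundedness of `z` says that `φ t = O(t ^ (α - 1))`.
-/

section PowerSeries

theorem rpow_mul_exp_neg_le_Gamma {M x : ℝ} (hM : 0 < M) (hx : 1 ≤ x) :
    M ^ (x - 1) * Real.exp (-M) ≤ Real.Gamma x := by
  have hint := Real.GammaIntegral_convergent (s := x) (by linarith)
  calc M ^ (x - 1) * Real.exp (-M) = ∫ y in Set.Ioi M, Real.exp (-y) * M ^ (x - 1) := by
        rw [integral_mul_const, integral_exp_neg_Ioi, mul_comm]
    _ ≤ ∫ y in Set.Ioi M, Real.exp (-y) * y ^ (x - 1) := by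
        refine setIntegral_mono_on ((integrableOn_exp_neg_Ioi M).mul_const _)
          (hint.mono_set (Set.Ioi_subset_Ioi hM.le)) measurableSet_Ioi fun y hy ↦ ?_
        have : M ≤ y := le_of_lt hy
        gcongr
    _ ≤ ∫ y in Set.Ioi 0, Real.exp (-y) * y ^ (x - 1) := by
        refine setIntegral_mono_set hint ?_ (Set.Ioi_subset_Ioi hM.le).eventuallyLE
        filter_upwards [ae_restrict_mem measurableSet_Ioi] with y hy
        exact mul_nonneg (Real.exp_pos _).le (Real.rpow_nonneg (le_of_lt hy) _)
    _ = Real.Gamma x := (Real.Gamma_eq_integral (by linarith)).symm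

theorem summable_norm_inv_Gamma_mul_pow {α : ℝ} (hα : 0 < α) (β : ℝ) {R : ℝ} (hR : 0 ≤ R) :
    Summable fun k : ℕ ↦ ‖(Real.Gamma (α * k + β))⁻¹‖ * R ^ k := by
  obtain ⟨M, hM, hMα⟩ : ∃ M : ℝ, 0 < M ∧ M ^ α = 2 * R + 1 :=
    ⟨(2 * R + 1) ^ α⁻¹, by positivity, Real.rpow_inv_rpow (by positivity) hα.ne'⟩
  have hratio : R / (2 * R + 1) < 1 := by
    rw [div_lt_one (by positivity)]; linarith
  refine Summable.of_norm_bounded_eventually_nat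
    (g := fun k : ℕ ↦ M ^ (1 - β) * Real.exp M * (R / (2 * R + 1)) ^ k)
    ((summable_geometric_of_lt_one (by positivity) hratio).mul_left _) ?_
  have hlarge : ∀ᶠ k : ℕ in atTop, 1 ≤ α * k + β :=
    (tendsto_atTop_add_const_right _ _
      (tendsto_natCast_atTop_atTop.const_mul_atTop hα)).eventually_ge_atTop 1
  filter_upwards [hlarge] with k hk
  have hGamma := rpow_mul_exp_neg_le_Gamma hM hk
  have hlower : 0 < M ^ (α * k + β - 1) * Real.exp (-M) := by positivity
  rw [norm_mul, norm_norm, norm_inv, Real.norm_of_nonneg (hlower.le.trans hGamma),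
    Real.norm_of_nonneg (pow_nonneg hR k)]
  calc (Real.Gamma (α * k + β))⁻¹ * R ^ k
      ≤ (M ^ (α * k + β - 1) * Real.exp (-M))⁻¹ * R ^ k := by gcongr
    _ = M ^ (1 - β) * Real.exp M * ((M ^ α) ^ k)⁻¹ * R ^ k := by
        rw [← Real.rpow_natCast (M ^ α), ← Real.rpow_mul hM.le, mul_inv, ← Real.rpow_neg hM.le,
          Real.exp_neg, inv_inv, ← Real.rpow_neg hM.le, mul_right_comm (M ^ (1 - β)),
          ← Real.rpow_add hM]
        ring_nf
    _ = M ^ (1 - β) * Real.exp M * (R / (2 * R + 1)) ^ k := by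
        rw [hMα, div_pow]; ring

variable {𝕜 𝔸 : Type*} [NormedField 𝕜] [NormedRing 𝔸] [NormedAlgebra 𝕜 𝔸]

theorem norm_smul_pow_le (c : 𝕜) (a : 𝔸) (k : ℕ) :
    ‖c • a ^ k‖ ≤ max 1 ‖(1 : 𝔸)‖ * (‖c‖ * ‖a‖ ^ k) := by
  have hpow : ‖a ^ k‖ ≤ max 1 ‖(1 : 𝔸)‖ * ‖a‖ ^ k := by
    rcases Nat.eq_zero_or_pos k with rfl | hk
    · simp
    · exact (norm_pow_le' a hk).trans
        (le_mul_of_one_le_left (by positivity) (le_max_left _ _))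
  calc ‖c • a ^ k‖ ≤ ‖c‖ * (max 1 ‖(1 : 𝔸)‖ * ‖a‖ ^ k) := by rw [norm_smul]; gcongr
    _ = max 1 ‖(1 : 𝔸)‖ * (‖c‖ * ‖a‖ ^ k) := by ring

theorem summable_norm_smul_pow {c : ℕ → 𝕜} {a : 𝔸} (hc : Summable fun k ↦ ‖c k‖ * ‖a‖ ^ k) :
    Summable fun k ↦ ‖c k • a ^ k‖ :=
  .of_nonneg_of_le (fun _ ↦ norm_nonneg _) (fun k ↦ norm_smul_pow_le (c k) a k) (hc.mul_left _)

theorem continuous_tsum_smul_pow [CompleteSpace 𝔸] {c : ℕ → 𝕜}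
    (hc : ∀ R : ℝ, 0 ≤ R → Summable fun k ↦ ‖c k‖ * R ^ k) :
    Continuous fun a : 𝔸 ↦ ∑' k, c k • a ^ k := by
  refine continuous_iff_continuousAt.2 fun a₀ ↦ ?_
  have hball : Metric.ball (0 : 𝔸) (‖a₀‖ + 1) ∈ 𝓝 a₀ := Metric.isOpen_ball.mem_nhds (by simp)
  refine ContinuousOn.continuousAt ?_ hball
  refine continuousOn_tsum (fun k ↦ by fun_prop)
    ((hc (‖a₀‖ + 1) (by positivity)).mul_left (max 1 ‖(1 : 𝔸)‖)) fun k a ha ↦ ?_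
  have hle : ‖a‖ ≤ ‖a₀‖ + 1 := (mem_ball_zero_iff.1 ha).le
  refine (norm_smul_pow_le (c k) a k).trans ?_
  gcongr

end PowerSeries

section MittagLeffler

/-- The two-parameter Mittag-Leffler function `E_{α,β}(a) = ∑ aᵏ / Γ(αk + β)` on a topological
real algebra; for real square matrices it unfolds to `ML`. -/
noncomputable def mittagLeffler {𝔸 : Type*} [Ring 𝔸] [Algebra ℝ 𝔸] [TopologicalSpace 𝔸]
    (α β : ℝ) (a : 𝔸) : 𝔸 :=
  ∑' k : ℕ, (Real.Gamma (α * k + β))⁻¹ • a ^ k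

variable {𝔸 : Type*} [NormedRing 𝔸] [NormedAlgebra ℝ 𝔸] [CompleteSpace 𝔸] {α : ℝ}

theorem hasSum_mittagLeffler (hα : 0 < α) (β : ℝ) (a : 𝔸) :
    HasSum (fun k : ℕ ↦ (Real.Gamma (α * k + β))⁻¹ • a ^ k) (mittagLeffler α β a) :=
  (summable_norm_smul_pow
    (summable_norm_inv_Gamma_mul_pow hα β (norm_nonneg a))).of_norm.hasSum

theorem continuous_mittagLeffler (hα : 0 < α) (β : ℝ) :
    Continuous (mittagLeffler α β : 𝔸 → 𝔸) :=
  continuous_tsum_smul_pow fun _ hR ↦ summable_norm_inv_Gamma_mul_pow hα β hR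

theorem map_mittagLeffler {𝔹 : Type*} [NormedRing 𝔹] [NormedAlgebra ℝ 𝔹] (hα : 0 < α) (β : ℝ)
    (f : 𝔸 →+* 𝔹) (hf : Continuous f) (a : 𝔸) :
    f (mittagLeffler α β a) = mittagLeffler α β (f a) := by
  have hsum := (hasSum_mittagLeffler hα β a).map f hf
  simp only [Function.comp_def, map_real_smul f hf, map_pow] at hsum
  exact hsum.tsum_eq.symm

end MittagLeffler

section Resolvent

variable {𝕜 𝔸 : Type*} [NontriviallyNormedField 𝕜] [NormedRing 𝔸] [NormedAlgebra 𝕜 𝔸]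

theorem smul_resolvent_eq_one_add {a : 𝔸} {w : 𝕜} (hw : w ∈ resolventSet 𝕜 a) :
    w • resolvent a w = 1 + a * resolvent a w := by
  have hinv := Ring.mul_inverse_cancel _ hw
  rw [sub_mul, Algebra.algebraMap_eq_smul_one, smul_one_mul, ← Algebra.algebraMap_eq_smul_one,
    sub_eq_iff_eq_add] at hinv
  exact hinv

variable [CompleteSpace 𝔸]

theorem exists_norm_resolvent_le [ProperSpace 𝕜] {a : 𝔸} {S : Set 𝕜} (hS : IsClosed S)
    (hsub : S ⊆ resolventSet 𝕜 a) : ∃ C, 0 ≤ C ∧ ∀ w ∈ S, ‖resolvent a w‖ ≤ C := by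
  have hfar : ∀ᶠ w in Bornology.cobounded 𝕜, ‖resolvent a w‖ ≤ 1 := by
    have h := (spectrum.resolvent_tendsto_cobounded (𝕜 := 𝕜) a).norm
    rw [norm_zero] at h
    exact (h.eventually (gt_mem_nhds one_pos)).mono fun _ ↦ le_of_lt
  rw [Metric.cobounded_eq_cocompact, Filter.eventually_iff, Filter.mem_cocompact] at hfar
  obtain ⟨K, hK, hfar⟩ := hfar
  have hcont : ContinuousOn (resolvent a) (S ∩ K) := fun w hw ↦
    (spectrum.hasDerivAt_resolvent_const_left (hsub hw.1)).continuousAt.continuousWithinAt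
  obtain ⟨C, hC⟩ := (hK.inter_left hS).exists_bound_of_continuousOn hcont
  refine ⟨max C 1, by positivity, fun w hw ↦ ?_⟩
  by_cases hwK : w ∈ K
  · exact (hC w ⟨hw, hwK⟩).trans (le_max_left _ _)
  · exact (hfar hwK).trans (le_max_right _ _)

theorem exists_one_add_norm_mul_norm_resolvent_le [ProperSpace 𝕜] {a : 𝔸} {S : Set 𝕜}
    (hS : IsClosed S) (hsub : S ⊆ resolventSet 𝕜 a) :
    ∃ C, 0 ≤ C ∧ ∀ w ∈ S, (1 + ‖w‖) * ‖resolvent a w‖ ≤ C := by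
  obtain ⟨C, hC0, hC⟩ := exists_norm_resolvent_le hS hsub
  refine ⟨C + (‖(1 : 𝔸)‖ + ‖a‖ * C), by positivity, fun w hw ↦ ?_⟩
  have hsmul : ‖w‖ * ‖resolvent a w‖ ≤ ‖(1 : 𝔸)‖ + ‖a‖ * C := by
    rw [← norm_smul, smul_resolvent_eq_one_add (hsub hw)]
    refine (norm_add_le _ _).trans (add_le_add_right ((norm_mul_le _ _).trans ?_) _)
    gcongr
    exact hC w hw
  linarith [hC w hw]

theorem hasSum_resolvent_pow {a : 𝔸} {w : 𝕜} (haw : ‖a‖ < ‖w‖) (m : ℕ) :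
    HasSum (fun k : ℕ ↦ (((k + m).choose m : 𝕜) * w⁻¹ ^ (k + m + 1)) • a ^ k)
      (resolvent a w ^ (m + 1)) := by
  have hw : w ≠ 0 := norm_pos_iff.1 ((norm_nonneg a).trans_lt haw)
  have hlt : ‖w⁻¹ • a‖ < 1 := by
    rwa [norm_smul, norm_inv, inv_mul_lt_one₀ (norm_pos_iff.2 hw)]
  have hres : resolvent a w = w⁻¹ • Ring.inverse (1 - w⁻¹ • a) := by
    have h := spectrum.units_smul_resolvent_self (r := Units.mk0 w hw) (a := a)
    simp only [resolvent, Units.smul_def, Units.val_mk0, map_one, Units.val_inv_eq_inv_val] at h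
    rw [resolvent, ← h, inv_smul_smul₀ hw]
  have hsum := (hasSum_choose_mul_geometric_of_norm_lt_one' m hlt).const_smul (w⁻¹ ^ (m + 1))
  rw [← smul_pow, ← hres] at hsum
  refine hsum.congr_fun fun k ↦ ?_
  rw [smul_pow, ← nsmul_eq_mul _ (_ • _), ← Nat.cast_smul_eq_nsmul 𝕜, smul_smul, smul_smul]
  congr 1
  ring

end Resolvent

section Sector

/-- The closed sector `{0} ∪ {w : |arg w| ≤ θ}` for `0 ≤ θ ≤ π`, cut out by a closed condition
that does not mention the discontinuous function `arg`. -/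
def closedSector (θ : ℝ) : Set ℂ := {w | ‖w‖ * Real.cos θ ≤ w.re}

theorem isClosed_closedSector (θ : ℝ) : IsClosed (closedSector θ) :=
  isClosed_le (by fun_prop) (by fun_prop)

theorem cpow_mem_closedSector {α : ℝ} (hα0 : 0 ≤ α) (hα2 : α ≤ 2) {z : ℂ} (hz : 0 ≤ z.re) :
    z ^ (α : ℂ) ∈ closedSector (α * Real.pi / 2) := by
  have harg := Complex.abs_arg_le_pi_div_two_iff.2 hz
  rw [closedSector, Set.mem_ofPred_eq, Complex.norm_cpow_real, Complex.cpow_ofReal_re,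
    ← Real.cos_abs (z.arg * α), abs_mul, abs_of_nonneg hα0]
  gcongr
  exact Real.cos_le_cos_of_nonneg_of_le_pi (by positivity) (by nlinarith [Real.pi_pos])
    (by nlinarith)

theorem closedSector_subset_resolventSet {𝔸 : Type*} [Ring 𝔸] [Algebra ℂ 𝔸] {a : 𝔸} {θ : ℝ}
    (hθ : 0 ≤ θ) (hspec : ∀ μ ∈ spectrum ℂ a, μ ≠ 0 ∧ θ < |μ.arg|) :
    closedSector θ ⊆ resolventSet ℂ a := by
  intro w hw
  by_contra hmem
  obtain ⟨hw0, harg⟩ := hspec w hmem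
  have hcos := Real.cos_lt_cos_of_nonneg_of_le_pi hθ (Complex.abs_arg_le_pi w) harg
  rw [Real.cos_abs, Complex.cos_arg hw0, div_lt_iff₀ (norm_pos_iff.2 hw0), mul_comm] at hcos
  exact hcos.not_ge hw

end Sector

section ResolventCpow

variable {𝔸 : Type*} [NormedRing 𝔸] [NormedAlgebra ℂ 𝔸]

/-- The second derivative of `z ↦ (z ^ α - a)⁻¹` on the right half-plane. It is the Laplace
transform of `t ↦ t ^ (1 + α) * E_{α,α}(t ^ α a)`; the resolvent itself decays too slowly to be
integrated along vertical lines. -/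
noncomputable def resolventCpowDeriv2 (α : ℝ) (a : 𝔸) (z : ℂ) : 𝔸 :=
  ((α * (1 - α) : ℝ) * z ^ ((α - 2 : ℝ) : ℂ)) • resolvent a (z ^ (α : ℂ)) ^ 2 +
  ((2 * α ^ 2 : ℝ) * z ^ ((2 * α - 2 : ℝ) : ℂ)) • resolvent a (z ^ (α : ℂ)) ^ 3

variable {α : ℝ} {a : 𝔸} {z : ℂ}

theorem norm_resolventCpowDeriv2_le (hα0 : 0 ≤ α) (hα1 : α ≤ 1) (hz : z ≠ 0) {C : ℝ}
    (hC : 0 ≤ C) (hres : (1 + ‖z ^ (α : ℂ)‖) * ‖resolvent a (z ^ (α : ℂ))‖ ≤ C) :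
    ‖resolventCpowDeriv2 α a z‖ ≤
      (α * (1 - α) * C ^ 2 + 2 * α ^ 2 * C ^ 3) * ‖z‖ ^ (α - 2) := by
  have hα : 0 ≤ α * (1 - α) := mul_nonneg hα0 (sub_nonneg.2 hα1)
  have hzα : ‖z‖ ^ (2 * α - 2) = ‖z‖ ^ (α - 2) * ‖z‖ ^ α := by
    rw [← Real.rpow_add (norm_pos_iff.2 hz)]; ring_nf
  rw [Complex.norm_cpow_real] at hres
  rw [resolventCpowDeriv2]
  set r := resolvent a (z ^ (α : ℂ))
  have hr : ‖r‖ ≤ C := by nlinarith [norm_nonneg r, Real.rpow_nonneg (norm_nonneg z) α]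
  have hzr : ‖z‖ ^ α * ‖r‖ ≤ C := by nlinarith [norm_nonneg r]
  refine (norm_add_le _ _).trans ?_
  simp only [norm_smul, norm_mul, Complex.norm_real, Complex.norm_cpow_real, hzα,
    Real.norm_of_nonneg hα, Real.norm_of_nonneg (show 0 ≤ 2 * α ^ 2 by positivity)]
  calc α * (1 - α) * ‖z‖ ^ (α - 2) * ‖r ^ 2‖
        + 2 * α ^ 2 * (‖z‖ ^ (α - 2) * ‖z‖ ^ α) * ‖r ^ 3‖
      ≤ α * (1 - α) * ‖z‖ ^ (α - 2) * ‖r‖ ^ 2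
        + 2 * α ^ 2 * (‖z‖ ^ (α - 2) * ‖z‖ ^ α) * ‖r‖ ^ 3 := by
        gcongr <;> exact norm_pow_le' r (by norm_num)
    _ = α * (1 - α) * ‖z‖ ^ (α - 2) * ‖r‖ ^ 2
        + 2 * α ^ 2 * ‖z‖ ^ (α - 2) * ((‖z‖ ^ α * ‖r‖) * ‖r‖ ^ 2) := by ring
    _ ≤ α * (1 - α) * ‖z‖ ^ (α - 2) * C ^ 2 + 2 * α ^ 2 * ‖z‖ ^ (α - 2) * (C * C ^ 2) := by
        gcongr
    _ = (α * (1 - α) * C ^ 2 + 2 * α ^ 2 * C ^ 3) * ‖z‖ ^ (α - 2) := by ring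

variable [CompleteSpace 𝔸]

theorem differentiableAt_resolventCpowDeriv2 (hz : z ∈ Complex.slitPlane)
    (hmem : z ^ (α : ℂ) ∈ resolventSet ℂ a) :
    DifferentiableAt ℂ (resolventCpowDeriv2 α a) z := by
  have hcpow : ∀ c : ℂ, DifferentiableAt ℂ (fun z : ℂ ↦ z ^ c) z := fun c ↦
    ((hasDerivAt_id z).cpow_const hz).differentiableAt
  have hres : DifferentiableAt ℂ (fun z : ℂ ↦ resolvent a (z ^ (α : ℂ))) z :=
    DifferentiableAt.comp (g := resolvent a) z
      (spectrum.hasDerivAt_resolvent_const_left hmem).differentiableAt (hcpow _)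
  exact (((hcpow _).const_mul _).smul (hres.pow 2)).add
    (((hcpow _).const_mul _).smul (hres.pow 3))

theorem hasSum_resolventCpowDeriv2 (ha : ‖a‖ < ‖z ^ (α : ℂ)‖) (hz : z ≠ 0) :
    HasSum (fun k : ℕ ↦ (((α * k + α) * (α * k + α + 1) : ℝ) *
      z ^ (-((α * k + α + 2 : ℝ) : ℂ))) • a ^ k) (resolventCpowDeriv2 α a z) := by
  have hsum := ((hasSum_resolvent_pow ha 1).const_smul
    (((α * (1 - α) : ℝ) : ℂ) * z ^ ((α - 2 : ℝ) : ℂ))).add ((hasSum_resolvent_pow ha 2).const_smul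
    (((2 * α ^ 2 : ℝ) : ℂ) * z ^ ((2 * α - 2 : ℝ) : ℂ)))
  refine hsum.congr_fun fun k ↦ ?_
  have hexp : ∀ (p : ℝ) (n : ℕ), p - n * α = -(α * k + α + 2) →
      z ^ (p : ℂ) * (z ^ (α : ℂ))⁻¹ ^ n = z ^ (-((α * k + α + 2 : ℝ) : ℂ)) := by
    intro p n hpn
    rw [← Complex.cpow_neg, ← Complex.cpow_nat_mul, ← Complex.cpow_add _ _ hz,
      ← Complex.ofReal_neg (α * k + α + 2), ← hpn]
    push_cast
    ring_nf
  have hexp2 := hexp (α - 2) (k + 1 + 1) (by push_cast; ring)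
  have hexp3 := hexp (2 * α - 2) (k + 2 + 1) (by push_cast; ring)
  have hchoose : (((k + 2).choose 2 : ℕ) : ℂ) = (k + 2) * (k + 1) / 2 := by
    rw [Nat.cast_choose_two]; push_cast; ring
  rw [smul_smul, smul_smul, ← add_smul, Nat.choose_one_right, hchoose]
  congr 1
  push_cast at hexp2 hexp3 ⊢
  linear_combination (-(α * (1 - α) * (k + 1)) : ℂ) * hexp2 - (α ^ 2 * (k + 2) * (k + 1)) * hexp3

end ResolventCpow

section LaplaceTransform

theorem norm_cexp_neg_mul_ofReal (z : ℂ) (t : ℝ) :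
    ‖Complex.exp (-(z * t))‖ = Real.exp (-(z.re * t)) := by
  rw [Complex.norm_exp]; simp

theorem integrableOn_rpow_mul_exp_neg_mul {s b : ℝ} (hs : -1 < s) (hb : 0 < b) :
    IntegrableOn (fun t : ℝ ↦ t ^ s * Real.exp (-(b * t))) (Set.Ioi 0) := by
  simpa [neg_mul] using integrableOn_rpow_mul_exp_neg_mul_rpow (p := 1) hs one_pos hb

theorem aestronglyMeasurable_rpow_mul_cexp (s : ℝ) (z : ℂ) (μ : Measure ℝ) :
    AEStronglyMeasurable (fun t : ℝ ↦ ((t ^ s : ℝ) : ℂ) * Complex.exp (-(z * t))) μ :=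
  Measurable.aestronglyMeasurable (by fun_prop)

theorem norm_rpow_mul_cexp (s : ℝ) (z : ℂ) {t : ℝ} (ht : 0 ≤ t) :
    ‖((t ^ s : ℝ) : ℂ) * Complex.exp (-(z * t))‖ = t ^ s * Real.exp (-(z.re * t)) := by
  rw [norm_mul, norm_cexp_neg_mul_ofReal, Complex.norm_real, Real.norm_of_nonneg (by positivity)]

theorem integrableOn_rpow_mul_cexp {s : ℝ} {z : ℂ} (hs : -1 < s) (hz : 0 < z.re) :
    IntegrableOn (fun t : ℝ ↦ ((t ^ s : ℝ) : ℂ) * Complex.exp (-(z * t))) (Set.Ioi 0) := by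
  refine (integrableOn_rpow_mul_exp_neg_mul hs hz).mono'
    (aestronglyMeasurable_rpow_mul_cexp s z _) ?_
  filter_upwards [ae_restrict_mem measurableSet_Ioi] with t ht
  exact (norm_rpow_mul_cexp s z (le_of_lt ht)).le

theorem differentiableAt_integral_rpow_mul_cexp {s : ℝ} {z : ℂ} (hs : -1 < s) (hz : 0 < z.re) :
    DifferentiableAt ℂ (fun z : ℂ ↦ ∫ t in Set.Ioi (0 : ℝ),
      ((t ^ s : ℝ) : ℂ) * Complex.exp (-(z * t))) z := by
  have hnhds : {w : ℂ | z.re / 2 < w.re} ∈ 𝓝 z :=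
    (isOpen_lt continuous_const Complex.continuous_re).mem_nhds (by simpa using hz)
  refine (hasDerivAt_integral_of_dominated_loc_of_deriv_le (𝕜 := ℂ)
    (F' := fun z t ↦ ((t ^ s : ℝ) : ℂ) * (Complex.exp (-(z * t)) * (-t)))
    (bound := fun t ↦ t ^ (s + 1) * Real.exp (-(z.re / 2 * t))) hnhds
    (Eventually.of_forall fun w ↦ aestronglyMeasurable_rpow_mul_cexp s w _)
    (integrableOn_rpow_mul_cexp hs hz) (Measurable.aestronglyMeasurable (by fun_prop)) ?_
    (integrableOn_rpow_mul_exp_neg_mul (by linarith) (half_pos hz)) ?_).2.differentiableAt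
  · filter_upwards [ae_restrict_mem measurableSet_Ioi] with t ht w hw
    have ht : 0 < t := ht
    have : z.re / 2 < w.re := hw
    rw [← mul_assoc, norm_mul, norm_rpow_mul_cexp s w ht.le, norm_neg, Complex.norm_real,
      Real.norm_of_nonneg ht.le, mul_right_comm, Real.rpow_add_one ht.ne']
    gcongr
  · refine Eventually.of_forall fun t w _ ↦ (HasDerivAt.cexp ?_).const_mul _
    exact (hasDerivAt_mul_const (t : ℂ)).neg

theorem integral_rpow_mul_cexp_of_real {β x : ℝ} (hβ : 0 < β) (hx : 0 < x) :
    ∫ t in Set.Ioi (0 : ℝ), ((t ^ (β - 1) : ℝ) : ℂ) * Complex.exp (-(x * t)) =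
      (x : ℂ) ^ (-(β : ℂ)) * Real.Gamma β := by
  have h := congrArg ((↑) : ℝ → ℂ) (Real.integral_rpow_mul_exp_neg_mul_Ioi hβ hx)
  rw [← integral_complex_ofReal, one_div, Real.inv_rpow hx.le, ← Real.rpow_neg hx.le,
    Complex.ofReal_mul, Complex.ofReal_cpow hx.le] at h
  push_cast at h ⊢
  exact h

-- Both sides are analytic in `z` on the right half-plane and agree for real `z`.
theorem integral_rpow_mul_cexp {β : ℝ} {z : ℂ} (hβ : 0 < β) (hz : 0 < z.re) :
    ∫ t in Set.Ioi (0 : ℝ), ((t ^ (β - 1) : ℝ) : ℂ) * Complex.exp (-(z * t)) =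
      z ^ (-(β : ℂ)) * Real.Gamma β := by
  have hopen : IsOpen {w : ℂ | 0 < w.re} := isOpen_lt continuous_const Complex.continuous_re
  have hconn : IsPreconnected {w : ℂ | 0 < w.re} := (convex_halfSpace_re_gt 0).isPreconnected
  have hleft : AnalyticOnNhd ℂ (fun z : ℂ ↦ ∫ t in Set.Ioi (0 : ℝ),
      ((t ^ (β - 1) : ℝ) : ℂ) * Complex.exp (-(z * t))) {w : ℂ | 0 < w.re} :=
    DifferentiableOn.analyticOnNhd (fun w hw ↦
      (differentiableAt_integral_rpow_mul_cexp (by linarith) hw).differentiableWithinAt) hopen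
  have hright : AnalyticOnNhd ℂ (fun z : ℂ ↦ z ^ (-(β : ℂ)) * Real.Gamma β) {w : ℂ | 0 < w.re} :=
    DifferentiableOn.analyticOnNhd (fun w hw ↦ (((hasDerivAt_id w).cpow_const
      (Or.inl hw)).mul_const _).differentiableAt.differentiableWithinAt) hopen
  refine hleft.eqOn_of_preconnected_of_frequently_eq hright hconn (z₀ := 1) (by simp) ?_ hz
  have hofReal : Tendsto ((↑) : ℝ → ℂ) (𝓝[≠] 1) (𝓝[≠] 1) := by
    refine tendsto_nhdsWithin_of_tendsto_nhds_of_eventually_within _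
      ((Complex.continuous_ofReal.tendsto' 1 1 (by simp)).mono_left nhdsWithin_le_nhds) ?_
    filter_upwards [self_mem_nhdsWithin] with x hx
    simpa using hx
  refine hofReal.frequently (Eventually.frequently ?_)
  filter_upwards [nhdsWithin_le_nhds (lt_mem_nhds one_pos)] with x hx
  exact integral_rpow_mul_cexp_of_real hβ hx

theorem integrable_of_hasSum_of_summable_integral_norm {X E ι : Type*} [MeasurableSpace X]
    {μ : Measure X} [NormedAddCommGroup E] [Countable ι] {F : ι → X → E} {f : X → E}
    (hF : ∀ i, Integrable (F i) μ) (hsum : Summable fun i ↦ ∫ x, ‖F i x‖ ∂μ)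
    (hf : ∀ᵐ x ∂μ, HasSum (F · x) (f x)) : Integrable f μ := by
  refine ⟨aestronglyMeasurable_of_tendsto_ae atTop
    (f := fun (s : Finset ι) x ↦ ∑ i ∈ s, F i x)
    (fun s ↦ Finset.aestronglyMeasurable_fun_sum s fun i _ ↦ (hF i).1) hf, ?_⟩
  calc ∫⁻ x, ‖f x‖ₑ ∂μ ≤ ∫⁻ x, ∑' i, ‖F i x‖ₑ ∂μ := by
        refine lintegral_mono_ae ?_
        filter_upwards [hf] with x hx
        rw [← hx.tsum_eq]
        exact enorm_tsum_le_tsum_enorm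
    _ = ∑' i, ENNReal.ofReal (∫ x, ‖F i x‖ ∂μ) := by
        rw [lintegral_tsum fun i ↦ (hF i).1.enorm]
        simp_rw [← ofReal_integral_norm_eq_lintegral_enorm (hF _)]
    _ < ⊤ := hsum.tsum_ofReal_lt_top

section PowerSeriesTransform

variable {E : Type*} [NormedAddCommGroup E] [NormedSpace ℂ E] {β : ℕ → ℝ} {c : ℕ → E} {z : ℂ}
  {f : ℝ → E}

theorem summable_integral_norm_rpow_mul_cexp_smul (hβ : ∀ k, 0 < β k) (hz : 0 < z.re)
    (hc : Summable fun k ↦ Real.Gamma (β k) * z.re ^ (-β k) * ‖c k‖) :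
    Summable fun k ↦ ∫ t in Set.Ioi (0 : ℝ),
      ‖(((t ^ (β k - 1) : ℝ) : ℂ) * Complex.exp (-(z * t))) • c k‖ := by
  refine hc.congr fun k ↦ ?_
  have hnorm : ∀ t ∈ Set.Ioi (0 : ℝ), ‖(((t ^ (β k - 1) : ℝ) : ℂ) * Complex.exp (-(z * t))) • c k‖ =
      t ^ (β k - 1) * Real.exp (-(z.re * t)) * ‖c k‖ := fun t ht ↦ by
    rw [norm_smul, norm_rpow_mul_cexp _ _ (le_of_lt ht)]
  rw [setIntegral_congr_fun measurableSet_Ioi hnorm, integral_mul_const,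
    Real.integral_rpow_mul_exp_neg_mul_Ioi (hβ k) hz, one_div, Real.inv_rpow hz.le,
    Real.rpow_neg hz.le, mul_comm (Real.Gamma _)]

theorem integrableOn_cexp_smul_of_hasSum_rpow (hβ : ∀ k, 0 < β k) (hz : 0 < z.re)
    (hc : Summable fun k ↦ Real.Gamma (β k) * z.re ^ (-β k) * ‖c k‖)
    (hf : ∀ t > 0, HasSum (fun k ↦ ((t ^ (β k - 1) : ℝ) : ℂ) • c k) (f t)) :
    IntegrableOn (fun t : ℝ ↦ Complex.exp (-(z * t)) • f t) (Set.Ioi 0) := by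
  refine integrable_of_hasSum_of_summable_integral_norm
    (fun k ↦ (integrableOn_rpow_mul_cexp (by linarith [hβ k]) hz).smul_const (c k))
    (summable_integral_norm_rpow_mul_cexp_smul hβ hz hc) ?_
  filter_upwards [ae_restrict_mem measurableSet_Ioi] with t ht
  simpa only [smul_smul, mul_comm] using (hf t ht).const_smul (Complex.exp (-(z * t)))

theorem hasSum_integral_cexp_smul_of_hasSum_rpow [CompleteSpace E] (hβ : ∀ k, 0 < β k)
    (hz : 0 < z.re)
    (hc : Summable fun k ↦ Real.Gamma (β k) * z.re ^ (-β k) * ‖c k‖)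
    (hf : ∀ t > 0, HasSum (fun k ↦ ((t ^ (β k - 1) : ℝ) : ℂ) • c k) (f t)) :
    HasSum (fun k ↦ (z ^ (-(β k : ℂ)) * Real.Gamma (β k)) • c k)
      (∫ t in Set.Ioi (0 : ℝ), Complex.exp (-(z * t)) • f t) := by
  have h := hasSum_integral_of_summable_integral_norm
    (fun k ↦ (integrableOn_rpow_mul_cexp (by linarith [hβ k]) hz).smul_const (c k))
    (summable_integral_norm_rpow_mul_cexp_smul hβ hz hc)
  have htsum : ∀ t ∈ Set.Ioi (0 : ℝ),
      ∑' k, (((t ^ (β k - 1) : ℝ) : ℂ) * Complex.exp (-(z * t))) • c k =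
        Complex.exp (-(z * t)) • f t := fun t ht ↦ by
    simpa only [smul_smul, mul_comm] using ((hf t ht).const_smul (Complex.exp (-(z * t)))).tsum_eq
  rw [setIntegral_congr_fun measurableSet_Ioi htsum] at h
  exact h.congr_fun fun k ↦ by rw [integral_smul_const, integral_rpow_mul_cexp (hβ k) hz]

end PowerSeriesTransform

end LaplaceTransform

section MittagLefflerLaplace

variable {𝔸 : Type*} [NormedRing 𝔸] [NormedAlgebra ℂ 𝔸] {α : ℝ}

/-- The function `t ↦ t ^ (1 + α) * E_{α,α}(t ^ α a)` on `[0, ∞)`, extended by zero to the real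
line so that it has a Fourier transform. -/
noncomputable def rpowMulMittagLeffler (α : ℝ) (a : 𝔸) (t : ℝ) : 𝔸 :=
  max t 0 ^ (1 + α) • mittagLeffler α α (max t 0 ^ α • a)

theorem rpowMulMittagLeffler_of_nonpos (hα : 0 < α) (a : 𝔸) {t : ℝ} (ht : t ≤ 0) :
    rpowMulMittagLeffler α a t = 0 := by
  rw [rpowMulMittagLeffler, max_eq_right ht, Real.zero_rpow (by positivity), zero_smul]

theorem Gamma_add_two {x : ℝ} (hx : 0 < x) :
    Real.Gamma (x + 2) = x * (x + 1) * Real.Gamma x := by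
  rw [show x + 2 = x + 1 + 1 by ring, Real.Gamma_add_one (by positivity),
    Real.Gamma_add_one hx.ne']
  ring

-- Up to the factor `max 1 ‖1‖` this is the expansion of `resolventCpowDeriv2 α ‖a‖ x`.
theorem summable_Gamma_mul_rpow_mul_norm (hα : 0 < α) {a : 𝔸} {x : ℝ} (hx : 0 < x)
    (ha : ‖a‖ < x ^ α) :
    Summable fun k : ℕ ↦ Real.Gamma (α * k + α + 2) * x ^ (-(α * k + α + 2)) *
      ‖(Real.Gamma (α * k + α))⁻¹ • a ^ k‖ := by
  have hmajor := (hasSum_resolventCpowDeriv2 (α := α) (a := ((‖a‖ : ℝ) : ℂ)) (z := x)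
    (by rw [Complex.norm_cpow_real]; simpa [abs_of_pos hx] using ha)
    (by exact_mod_cast hx.ne')).summable.norm.mul_left (max 1 ‖(1 : 𝔸)‖)
  refine hmajor.of_nonneg_of_le (fun k ↦ ?_) fun k ↦ ?_
  · have : 0 < Real.Gamma (α * k + α + 2) := Real.Gamma_pos_of_pos (by positivity)
    positivity
  have hpos : 0 < α * k + α := by positivity
  have hΓ : 0 < Real.Gamma (α * k + α) := Real.Gamma_pos_of_pos hpos
  rw [smul_eq_mul, norm_mul, norm_mul, Complex.norm_real, ← Complex.ofReal_neg,
    Complex.norm_cpow_real, Complex.norm_real, Real.norm_of_nonneg hx.le, norm_pow,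
    Complex.norm_real, norm_norm, Gamma_add_two hpos, Real.norm_of_nonneg (by positivity)]
  calc (α * k + α) * (α * k + α + 1) * Real.Gamma (α * k + α) * x ^ (-(α * k + α + 2)) *
        ‖(Real.Gamma (α * k + α))⁻¹ • a ^ k‖
      ≤ (α * k + α) * (α * k + α + 1) * Real.Gamma (α * k + α) * x ^ (-(α * k + α + 2)) *
        (max 1 ‖(1 : 𝔸)‖ * (‖(Real.Gamma (α * k + α))⁻¹‖ * ‖a‖ ^ k)) := by
        gcongr
        exact norm_smul_pow_le _ a k
    _ = max 1 ‖(1 : 𝔸)‖ *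
        ((α * k + α) * (α * k + α + 1) * x ^ (-(α * k + α + 2)) * ‖a‖ ^ k) := by
        rw [norm_inv, Real.norm_of_nonneg hΓ.le]
        field_simp

variable [CompleteSpace 𝔸]

theorem continuous_rpowMulMittagLeffler (hα : 0 < α) (a : 𝔸) :
    Continuous (rpowMulMittagLeffler α a) := by
  have hpow : ∀ p : ℝ, 0 < p → Continuous fun t : ℝ ↦ max t 0 ^ p := fun p hp ↦
    (continuous_id.max continuous_const).rpow_const fun _ ↦ Or.inr hp.le
  exact (hpow _ (by positivity)).smul ((continuous_mittagLeffler hα α).comp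
    ((hpow α hα).smul continuous_const))

theorem hasSum_rpowMulMittagLeffler (hα : 0 < α) (a : 𝔸) {t : ℝ} (ht : 0 < t) :
    HasSum (fun k : ℕ ↦ ((t ^ (α * k + α + 2 - 1) : ℝ) : ℂ) • (Real.Gamma (α * k + α))⁻¹ • a ^ k)
      (rpowMulMittagLeffler α a t) := by
  rw [rpowMulMittagLeffler, max_eq_left ht.le]
  refine ((hasSum_mittagLeffler hα α (t ^ α • a)).const_smul (t ^ (1 + α))).congr_fun fun k ↦ ?_
  have hpow : t ^ (α * k + α + 2 - 1) = t ^ (1 + α) * (t ^ α) ^ k := by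
    rw [← Real.rpow_natCast (t ^ α), ← Real.rpow_mul ht.le, ← Real.rpow_add ht]; ring_nf
  rw [Complex.coe_smul, smul_pow, smul_smul, smul_smul, smul_smul, hpow]
  congr 1
  ring

theorem integrableOn_cexp_smul_rpowMulMittagLeffler (hα : 0 < α) {a : 𝔸} {z : ℂ} (hz : 0 < z.re)
    (ha : ‖a‖ < z.re ^ α) :
    IntegrableOn (fun t : ℝ ↦ Complex.exp (-(z * t)) • rpowMulMittagLeffler α a t) (Set.Ioi 0) :=
  integrableOn_cexp_smul_of_hasSum_rpow (fun k ↦ by positivity) hz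
    (summable_Gamma_mul_rpow_mul_norm hα hz ha) fun _ ht ↦ hasSum_rpowMulMittagLeffler hα a ht

theorem integral_cexp_smul_rpowMulMittagLeffler (hα : 0 < α) {a : 𝔸} {z : ℂ} (hz : 0 < z.re)
    (ha : ‖a‖ < z.re ^ α) :
    ∫ t in Set.Ioi (0 : ℝ), Complex.exp (-(z * t)) • rpowMulMittagLeffler α a t =
      resolventCpowDeriv2 α a z := by
  have hz0 : z ≠ 0 := by rintro rfl; simp at hz
  have haz : ‖a‖ < ‖z ^ (α : ℂ)‖ := by
    rw [Complex.norm_cpow_real]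
    exact ha.trans_le (Real.rpow_le_rpow hz.le (Complex.re_le_norm z) hα.le)
  have hsum := hasSum_integral_cexp_smul_of_hasSum_rpow (f := rpowMulMittagLeffler α a)
    (fun k ↦ by positivity) hz (summable_Gamma_mul_rpow_mul_norm hα hz ha)
    fun _ ht ↦ hasSum_rpowMulMittagLeffler hα a ht
  refine hsum.unique ((hasSum_resolventCpowDeriv2 haz hz0).congr_fun fun k ↦ ?_)
  have hpos : 0 < α * k + α := by positivity
  have hΓ : (Real.Gamma (α * k + α) : ℂ) ≠ 0 := by
    exact_mod_cast (Real.Gamma_pos_of_pos hpos).ne'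
  rw [← Complex.coe_smul, smul_smul, Gamma_add_two hpos]
  congr 1
  simp only [Complex.ofReal_mul, Complex.ofReal_inv]
  rw [mul_assoc (z ^ _), mul_inv_cancel_right₀ hΓ, mul_comm]

end MittagLefflerLaplace

section VerticalLine

variable {p : ℝ}

theorem norm_add_mul_I_rpow {x : ℝ} (hx : 0 < x) (y p : ℝ) :
    ‖(x : ℂ) + y * Complex.I‖ ^ p = x ^ p * (1 + ‖y / x‖ ^ 2) ^ (p / 2) := by
  have hsq : x ^ 2 + y ^ 2 = x ^ 2 * (1 + ‖y / x‖ ^ 2) := by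
    rw [Real.norm_eq_abs, sq_abs]; field_simp
  rw [Complex.norm_add_mul_I, hsq, Real.sqrt_mul (by positivity), Real.sqrt_sq hx.le,
    Real.mul_rpow hx.le (by positivity), Real.sqrt_eq_rpow, ← Real.rpow_mul (by positivity)]
  ring_nf

theorem integrable_one_add_norm_sq_rpow (hp : p < -1) :
    Integrable fun y : ℝ ↦ (1 + ‖y‖ ^ 2) ^ (p / 2) := by
  simpa using integrable_rpow_neg_one_add_norm_sq (E := ℝ) (μ := volume) (r := -p)
    (by simpa using by linarith)

theorem integrable_norm_add_mul_I_rpow (hp : p < -1) {x : ℝ} (hx : 0 < x) :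
    Integrable fun y : ℝ ↦ ‖(x : ℂ) + y * Complex.I‖ ^ p := by
  simp_rw [norm_add_mul_I_rpow hx]
  exact ((integrable_one_add_norm_sq_rpow hp).comp_div hx.ne').const_mul _

theorem integral_norm_add_mul_I_rpow (p : ℝ) {x : ℝ} (hx : 0 < x) :
    ∫ y : ℝ, ‖(x : ℂ) + y * Complex.I‖ ^ p = x ^ (p + 1) * ∫ y : ℝ, (1 + ‖y‖ ^ 2) ^ (p / 2) := by
  simp_rw [norm_add_mul_I_rpow hx]
  rw [integral_const_mul, Measure.integral_comp_div fun y : ℝ ↦ (1 + ‖y‖ ^ 2) ^ (p / 2),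
    abs_of_pos hx, smul_eq_mul, ← mul_assoc, ← Real.rpow_add_one hx.ne']

variable {E : Type*} [NormedAddCommGroup E] [NormedSpace ℂ E] {H : ℂ → E} {C c c' : ℝ}

theorem norm_cexp_smul_le (hb : ∀ z : ℂ, 0 < z.re → ‖H z‖ ≤ C * ‖z‖ ^ p) (t : ℝ) {z : ℂ}
    (hz : 0 < z.re) :
    ‖Complex.exp (z * t) • H z‖ ≤ Real.exp (z.re * t) * (C * ‖z‖ ^ p) := by
  rw [norm_smul, Complex.norm_exp, Complex.re_mul_ofReal]
  gcongr
  exact hb z hz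

theorem integrable_cexp_smul_line (hp : p < -1)
    (hd : ∀ z : ℂ, 0 < z.re → DifferentiableAt ℂ H z)
    (hb : ∀ z : ℂ, 0 < z.re → ‖H z‖ ≤ C * ‖z‖ ^ p) (t : ℝ) (hc : 0 < c) :
    Integrable fun y : ℝ ↦ Complex.exp ((c + y * Complex.I) * t) • H (c + y * Complex.I) := by
  have hre : ∀ y : ℝ, 0 < ((c : ℂ) + y * Complex.I).re := fun y ↦ by simpa using hc
  have hcont : Continuous fun y : ℝ ↦ H (c + y * Complex.I) :=
    continuous_iff_continuousAt.2 fun y ↦ ContinuousAt.comp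
      (f := fun y : ℝ ↦ (c : ℂ) + y * Complex.I) (g := H) (hd _ (hre y)).continuousAt (by fun_prop)
  refine (((integrable_norm_add_mul_I_rpow hp hc).const_mul C).const_mul (Real.exp (c * t))).mono'
    (Continuous.smul (by fun_prop) hcont).aestronglyMeasurable (Eventually.of_forall fun y ↦ ?_)
  simpa using norm_cexp_smul_le hb t (hre y)

theorem norm_integral_cexp_smul_line_le (hp : p < -1)
    (hb : ∀ z : ℂ, 0 < z.re → ‖H z‖ ≤ C * ‖z‖ ^ p) (t : ℝ) (hc : 0 < c) :
    ‖∫ y : ℝ, Complex.exp ((c + y * Complex.I) * t) • H (c + y * Complex.I)‖ ≤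
      Real.exp (c * t) * (C * (c ^ (p + 1) * ∫ y : ℝ, (1 + ‖y‖ ^ 2) ^ (p / 2))) := by
  rw [← integral_norm_add_mul_I_rpow p hc, ← integral_const_mul, ← integral_const_mul]
  refine norm_integral_le_of_norm_le
    (((integrable_norm_add_mul_I_rpow hp hc).const_mul C).const_mul _)
    (Eventually.of_forall fun y ↦ ?_)
  simpa using norm_cexp_smul_le hb t (z := c + y * Complex.I) (by simpa using hc)

theorem tendsto_integral_cexp_smul_horizontal (hp : p < 0)
    (hb : ∀ z : ℂ, 0 < z.re → ‖H z‖ ≤ C * ‖z‖ ^ p) (t : ℝ) (hc : 0 < c) (hc' : 0 < c') :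
    Tendsto (fun Y : ℝ ↦ ∫ x : ℝ in c..c',
      Complex.exp ((x + Y * Complex.I) * t) • H (x + Y * Complex.I))
      (Bornology.cobounded ℝ) (𝓝 0) := by
  have hC : 0 ≤ C := by simpa using (norm_nonneg _).trans (hb 1 (by simp))
  have hlim : Tendsto (fun Y : ℝ ↦ Real.exp ((c + c') * |t|) * (C * ‖Y‖ ^ p) * |c' - c|)
      (Bornology.cobounded ℝ) (𝓝 0) := by
    have h := (tendsto_rpow_neg_atTop (neg_pos.2 hp)).comp (tendsto_norm_cobounded_atTop (E := ℝ))
    simpa using ((h.const_mul C).const_mul (Real.exp ((c + c') * |t|))).mul_const |c' - c|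
  refine squeeze_zero_norm' ?_ hlim
  filter_upwards [tendsto_norm_cobounded_atTop (E := ℝ) |>.eventually_gt_atTop 0] with Y hY
  refine intervalIntegral.norm_integral_le_of_norm_le_const fun x hx ↦ ?_
  have hxc : 0 < x ∧ x ≤ c + c' := by
    rcases Set.mem_uIcc.1 (Set.uIoc_subset_uIcc hx) with h | h <;>
      constructor <;> linarith [h.1, h.2]
  have hnorm : ‖Y‖ ≤ ‖(x : ℂ) + Y * Complex.I‖ := by
    simpa using Complex.abs_im_le_norm ((x : ℂ) + Y * Complex.I)
  refine (norm_cexp_smul_le hb t (z := x + Y * Complex.I) (by simpa using hxc.1)).trans ?_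
  have hexp : x * t ≤ (c + c') * |t| :=
    (mul_le_mul_of_nonneg_left (le_abs_self t) hxc.1.le).trans
      (mul_le_mul_of_nonneg_right hxc.2 (abs_nonneg t))
  gcongr ?_ * (C * ?_)
  · simpa using hexp
  · exact Real.rpow_le_rpow_of_nonpos hY hnorm hp.le

-- Cauchy on the rectangles of height `2 Y` between the two lines; the horizontal sides vanish.
theorem integral_cexp_smul_line_eq (hp : p < -1)
    (hd : ∀ z : ℂ, 0 < z.re → DifferentiableAt ℂ H z)
    (hb : ∀ z : ℂ, 0 < z.re → ‖H z‖ ≤ C * ‖z‖ ^ p) (t : ℝ) (hc : 0 < c) (hc' : 0 < c') :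
    ∫ y : ℝ, Complex.exp ((c + y * Complex.I) * t) • H (c + y * Complex.I) =
      ∫ y : ℝ, Complex.exp ((c' + y * Complex.I) * t) • H (c' + y * Complex.I) := by
  set Φ : ℂ → E := fun z ↦ Complex.exp (z * t) • H z
  have hrect : ∀ Y : ℝ, ((∫ x : ℝ in c..c', Φ (x + (-Y : ℝ) * Complex.I)) -
      ∫ x : ℝ in c..c', Φ (x + Y * Complex.I)) +
      Complex.I • (∫ y : ℝ in (-Y)..Y, Φ (c' + y * Complex.I)) -
      Complex.I • (∫ y : ℝ in (-Y)..Y, Φ (c + y * Complex.I)) = 0 := fun Y ↦ by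
    refine Complex.integral_boundary_rect_eq_zero_of_differentiableOn Φ ⟨c, -Y⟩ ⟨c', Y⟩
      fun z hz ↦ ?_
    have hre : 0 < z.re := (lt_min hc hc').trans_le hz.1.1
    have hexp : DifferentiableAt ℂ (fun z : ℂ ↦ Complex.exp (z * t)) z := by fun_prop
    exact (hexp.smul (hd z hre)).differentiableWithinAt
  have hhor := tendsto_integral_cexp_smul_horizontal (by linarith) hb t hc hc'
  have hver : ∀ c : ℝ, 0 < c → Tendsto (fun Y : ℝ ↦ ∫ y : ℝ in (-Y)..Y, Φ (c + y * Complex.I))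
      atTop (𝓝 (∫ y : ℝ, Φ (c + y * Complex.I))) := fun c hc ↦
    intervalIntegral_tendsto_integral (integrable_cexp_smul_line hp hd hb t hc)
      tendsto_neg_atTop_atBot tendsto_id
  have hbottom := hhor.comp
    (tendsto_neg_atTop_atBot.mono_right IsOrderBornology.atBot_le_cobounded)
  have htop := hhor.mono_left IsOrderBornology.atTop_le_cobounded
  have hlim := ((hbottom.sub htop).add ((hver c' hc').const_smul Complex.I)).sub
    ((hver c hc).const_smul Complex.I)
  have hzero := tendsto_nhds_unique hlim (tendsto_const_nhds.congr fun Y ↦ (hrect Y).symm)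
  rw [sub_zero, zero_add, ← smul_sub, smul_eq_zero_iff_right Complex.I_ne_zero] at hzero
  exact (sub_eq_zero.1 hzero).symm

end VerticalLine

section MittagLefflerDecay

variable {𝔸 : Type*} [NormedRing 𝔸] [NormedAlgebra ℂ 𝔸] [CompleteSpace 𝔸] {α : ℝ} {a : 𝔸} {c : ℝ}

theorem integrable_cexp_smul_rpowMulMittagLeffler (hα : 0 < α) (hc : 0 < c) (ha : ‖a‖ < c ^ α) :
    Integrable fun t : ℝ ↦ Complex.exp (-(c * t)) • rpowMulMittagLeffler α a t := by
  refine (integrableOn_iff_integrable_of_support_subset (s := Set.Ioi 0) fun t ht ↦ ?_).1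
    (integrableOn_cexp_smul_rpowMulMittagLeffler hα (z := c) hc ha)
  by_contra hmem
  exact ht (by simp only [rpowMulMittagLeffler_of_nonpos hα a (not_lt.1 hmem), smul_zero])

theorem fourier_cexp_smul_rpowMulMittagLeffler (hα : 0 < α) (hc : 0 < c) (ha : ‖a‖ < c ^ α)
    (ξ : ℝ) :
    FourierTransform.fourier (fun t : ℝ ↦ Complex.exp (-(c * t)) • rpowMulMittagLeffler α a t) ξ =
      resolventCpowDeriv2 α a (c + (2 * Real.pi * ξ : ℝ) * Complex.I) := by
  rw [Real.fourier_real_eq_integral_exp_smul, ← integral_cexp_smul_rpowMulMittagLeffler hα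
    (by simpa using hc) (by simpa using ha), setIntegral_eq_integral_of_forall_compl_eq_zero]
  · congr 1 with t
    rw [smul_smul, ← Complex.exp_add]
    congr 2
    push_cast
    ring
  · intro t ht
    rw [rpowMulMittagLeffler_of_nonpos hα a (not_lt.1 ht), smul_zero]

theorem rpowMulMittagLeffler_eq_integral (hα : 0 < α) (hc : 0 < c) (ha : ‖a‖ < c ^ α)
    (hint : Integrable fun y : ℝ ↦ resolventCpowDeriv2 α a (c + y * Complex.I)) (t : ℝ) :
    rpowMulMittagLeffler α a t = (2 * Real.pi)⁻¹ • ∫ y : ℝ,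
      Complex.exp ((c + y * Complex.I) * t) • resolventCpowDeriv2 α a (c + y * Complex.I) := by
  have hfourier := funext (fourier_cexp_smul_rpowMulMittagLeffler hα hc ha)
  have hcont : Continuous fun t : ℝ ↦ Complex.exp (-(c * t)) • rpowMulMittagLeffler α a t :=
    Continuous.smul (by fun_prop) (continuous_rpowMulMittagLeffler hα a)
  have hinv := congrFun (hcont.fourierInv_fourier_eq
    (integrable_cexp_smul_rpowMulMittagLeffler hα hc ha) (by
      rw [hfourier]
      exact hint.comp_mul_left' (by positivity : 2 * Real.pi ≠ 0))) t
  rw [Real.fourierInv_eq', hfourier] at hinv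
  have hscale := Measure.integral_comp_mul_left (fun y : ℝ ↦ Complex.exp ((c + y * Complex.I) * t) •
    resolventCpowDeriv2 α a (c + y * Complex.I)) (2 * Real.pi)
  rw [abs_of_pos (by positivity)] at hscale
  calc rpowMulMittagLeffler α a t
      = Complex.exp (c * t) • Complex.exp (-(c * t)) • rpowMulMittagLeffler α a t := by
        rw [smul_smul, ← Complex.exp_add, add_neg_cancel, Complex.exp_zero, one_smul]
    _ = _ := by
        rw [← hinv, ← integral_smul, ← hscale]
        congr 1 with ξ
        rw [smul_smul, ← Complex.exp_add]
        congr 2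
        simp only [RCLike.inner_apply, Real.ringHom_apply, Complex.ofReal_mul, Complex.ofReal_ofNat]
        ring

theorem exists_pos_lt_rpow (hα : 0 < α) (x : ℝ) : ∃ c : ℝ, 0 < c ∧ x < c ^ α :=
  ((eventually_gt_atTop 0).and ((tendsto_rpow_atTop hα).eventually_gt_atTop x)).exists

theorem differentiableAt_resolventCpowDeriv2_of_spectrum (hα0 : 0 < α) (hα2 : α ≤ 2)
    (hspec : ∀ μ ∈ spectrum ℂ a, μ ≠ 0 ∧ α * Real.pi / 2 < |μ.arg|)
    {z : ℂ} (hz : 0 < z.re) :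
    DifferentiableAt ℂ (resolventCpowDeriv2 α a) z :=
  differentiableAt_resolventCpowDeriv2 (Or.inl hz) (closedSector_subset_resolventSet
    (by positivity) hspec (cpow_mem_closedSector hα0.le hα2 hz.le))

theorem exists_norm_resolventCpowDeriv2_le_of_spectrum (hα0 : 0 < α) (hα1 : α < 1)
    (hspec : ∀ μ ∈ spectrum ℂ a, μ ≠ 0 ∧ α * Real.pi / 2 < |μ.arg|) :
    ∃ C, ∀ z : ℂ, 0 < z.re → ‖resolventCpowDeriv2 α a z‖ ≤ C * ‖z‖ ^ (α - 2) := by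
  obtain ⟨C, hC0, hC⟩ := exists_one_add_norm_mul_norm_resolvent_le (isClosed_closedSector _)
    (closedSector_subset_resolventSet (by positivity) hspec)
  exact ⟨_, fun z hz ↦ norm_resolventCpowDeriv2_le hα0.le hα1.le (by rintro rfl; simp at hz) hC0
    (hC _ (cpow_mem_closedSector hα0.le (by linarith) hz.le))⟩

-- The contour is moved to `re z = t⁻¹`, where `exp (z t)` stays bounded.
theorem exists_norm_rpowMulMittagLeffler_le (hα0 : 0 < α) (hα1 : α < 1)
    (hspec : ∀ μ ∈ spectrum ℂ a, μ ≠ 0 ∧ α * Real.pi / 2 < |μ.arg|) :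
    ∃ C, ∀ t > 0, ‖rpowMulMittagLeffler α a t‖ ≤ C * t ^ (1 - α) := by
  have hd := fun z ↦ differentiableAt_resolventCpowDeriv2_of_spectrum hα0 (by linarith) hspec
    (z := z)
  obtain ⟨C, hb⟩ := exists_norm_resolventCpowDeriv2_le_of_spectrum hα0 hα1 hspec
  have hp : α - 2 < -1 := by linarith
  obtain ⟨c, hc, hac⟩ := exists_pos_lt_rpow hα0 ‖a‖
  have hint : Integrable fun y : ℝ ↦ resolventCpowDeriv2 α a (c + y * Complex.I) := by
    simpa using integrable_cexp_smul_line hp hd hb 0 hc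
  refine ⟨(2 * Real.pi)⁻¹ * (Real.exp 1 * (C * ∫ y : ℝ, (1 + ‖y‖ ^ 2) ^ ((α - 2) / 2))),
    fun t ht ↦ ?_⟩
  have hline := norm_integral_cexp_smul_line_le hp hb t (inv_pos.2 ht)
  rw [inv_mul_cancel₀ ht.ne', Real.inv_rpow ht.le, ← Real.rpow_neg ht.le,
    show -(α - 2 + 1) = 1 - α by ring] at hline
  rw [rpowMulMittagLeffler_eq_integral hα0 hc hac hint, norm_smul, Real.norm_of_nonneg
    (by positivity), integral_cexp_smul_line_eq hp hd hb t hc (inv_pos.2 ht)]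
  refine (mul_le_mul_of_nonneg_left hline (by positivity)).trans_eq ?_
  ring

theorem exists_norm_mittagLeffler_rpow_smul_le (hα0 : 0 < α) (hα1 : α < 1)
    (hspec : ∀ μ ∈ spectrum ℂ a, μ ≠ 0 ∧ α * Real.pi / 2 < |μ.arg|) :
    ∃ C, ∀ t ≥ 0, ‖mittagLeffler α α (t ^ α • a)‖ ≤ C / (1 + t ^ α) ^ 2 := by
  obtain ⟨C, hC⟩ := exists_norm_rpowMulMittagLeffler_le hα0 hα1 hspec
  have hcont : Continuous fun t : ℝ ↦ mittagLeffler α α (t ^ α • a) :=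
    (continuous_mittagLeffler hα0 α).comp
      ((Real.continuous_rpow_const hα0.le).smul continuous_const)
  obtain ⟨B, hB⟩ := isCompact_Icc.exists_bound_of_continuousOn (s := Set.Icc (0 : ℝ) 1)
    hcont.continuousOn
  have hB0 : 0 ≤ B := (norm_nonneg _).trans (hB 0 (by simp))
  refine ⟨4 * max B C, fun t ht ↦ (le_div_iff₀ (by positivity)).2 ?_⟩
  rcases le_total t 1 with ht1 | ht1
  · have hpow : t ^ α ≤ 1 := Real.rpow_le_one ht ht1 hα0.le
    calc ‖mittagLeffler α α (t ^ α • a)‖ * (1 + t ^ α) ^ 2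
        ≤ max B C * (1 + 1) ^ 2 := by
          gcongr
          exact (hB t ⟨ht, ht1⟩).trans (le_max_left _ _)
      _ = 4 * max B C := by ring
  · have ht0 : 0 < t := by linarith
    have hpow : 1 ≤ t ^ α := Real.one_le_rpow ht1 hα0.le
    have hsplit : t ^ (1 + α) = t ^ (1 - α) * (t ^ α) ^ 2 := by
      rw [← Real.rpow_mul_natCast ht0.le, ← Real.rpow_add ht0]
      push_cast
      ring_nf
    have hdecay : ‖mittagLeffler α α (t ^ α • a)‖ * (t ^ α) ^ 2 ≤ C := by
      have h := hC t ht0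
      rw [rpowMulMittagLeffler, max_eq_left ht, norm_smul, Real.norm_of_nonneg (by positivity),
        hsplit, mul_comm, mul_comm C, mul_left_comm] at h
      exact le_of_mul_le_mul_left h (by positivity)
    calc ‖mittagLeffler α α (t ^ α • a)‖ * (1 + t ^ α) ^ 2
        ≤ ‖mittagLeffler α α (t ^ α • a)‖ * (2 * t ^ α) ^ 2 := by gcongr; linarith
      _ = 4 * (‖mittagLeffler α α (t ^ α • a)‖ * (t ^ α) ^ 2) := by ring
      _ ≤ 4 * max B C := by gcongr; exact hdecay.trans (le_max_right _ _)

end MittagLefflerDecay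

section BetaWeight

/-- The integrand `(1 - u) ^ (a - 1) * u ^ (b - 1)` of Euler's beta integral over `[0, 1]`. -/
noncomputable def betaWeight (a b u : ℝ) : ℝ := (1 - u) ^ (a - 1) * u ^ (b - 1)

variable {a b u : ℝ}

theorem betaWeight_nonneg (a b : ℝ) (hu : u ∈ Set.Icc (0 : ℝ) 1) : 0 ≤ betaWeight a b u :=
  mul_nonneg (Real.rpow_nonneg (sub_nonneg.2 hu.2) _) (Real.rpow_nonneg hu.1 _)

theorem integral_betaWeight_nonneg (a b : ℝ) : 0 ≤ ∫ u in (0 : ℝ)..1, betaWeight a b u :=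
  intervalIntegral.integral_nonneg zero_le_one fun _ hu ↦ betaWeight_nonneg a b hu

theorem intervalIntegrable_betaWeight (ha : 0 < a) (hb : 0 < b) :
    IntervalIntegrable (betaWeight a b) volume 0 1 := by
  have h := (Complex.betaIntegral_convergent (u := b) (v := a) (by simpa) (by simpa)).norm
  rw [intervalIntegrable_iff_integrableOn_Ioo_of_le zero_le_one] at h ⊢
  refine h.congr_fun (fun u hu ↦ ?_) measurableSet_Ioo
  have hsub : 1 - (u : ℂ) = ((1 - u : ℝ) : ℂ) := by push_cast; ring
  simp only [norm_mul]
  rw [hsub, Complex.norm_cpow_eq_rpow_re_of_pos hu.1,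
    Complex.norm_cpow_eq_rpow_re_of_pos (sub_pos.2 hu.2)]
  simp [betaWeight, mul_comm]

theorem exp_neg_le_rpow_neg {x δ : ℝ} (hx : 0 < x) (hδ0 : 0 ≤ δ) (hδ1 : δ ≤ 1) :
    Real.exp (-x) ≤ x ^ (-δ) := by
  have hpow : x ^ δ ≤ Real.exp x := by
    calc x ^ δ ≤ (x + 1) ^ δ := by gcongr; linarith
      _ ≤ (x + 1) ^ (1 : ℝ) := Real.rpow_le_rpow_of_exponent_le (by linarith) hδ1
      _ ≤ Real.exp x := by rw [Real.rpow_one]; exact Real.add_one_le_exp x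
  rw [Real.exp_neg, Real.rpow_neg hx.le]
  gcongr

theorem betaWeight_mul_exp_le {ρ c δ : ℝ} (ha : a ≤ 1) (hδ0 : 0 ≤ δ) (hδ1 : δ ≤ 1) (hc : 0 < c)
    (hρ : ρ ≤ 1) (hu : u ∈ Set.Ioo 0 ρ) :
    betaWeight a b u * Real.exp (-(c * (ρ - u))) ≤
      c ^ (-δ) * ρ ^ (b - 1 - δ) * betaWeight (a - δ) b (u / ρ) := by
  have hρ0 : 0 < ρ := hu.1.trans hu.2
  have hsub : 0 < 1 - u / ρ := sub_pos.2 ((div_lt_one hρ0).2 hu.2)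
  have hweight : (1 - u) ^ (a - 1) ≤ (1 - u / ρ) ^ (a - 1) :=
    Real.rpow_le_rpow_of_nonpos hsub (sub_le_sub_left (le_div_self hu.1.le hρ0 hρ) 1)
      (by linarith)
  have hexp : Real.exp (-(c * (ρ - u))) ≤ c ^ (-δ) * ρ ^ (-δ) * (1 - u / ρ) ^ (-δ) := by
    rw [← Real.mul_rpow hc.le hρ0.le, ← Real.mul_rpow (by positivity) hsub.le]
    refine (exp_neg_le_rpow_neg (mul_pos hc (sub_pos.2 hu.2)) hδ0 hδ1).trans_eq ?_
    congr 1
    field_simp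
  calc betaWeight a b u * Real.exp (-(c * (ρ - u)))
      ≤ (1 - u / ρ) ^ (a - 1) * u ^ (b - 1) *
          (c ^ (-δ) * ρ ^ (-δ) * (1 - u / ρ) ^ (-δ)) := by
        have := Real.rpow_nonneg hu.1.le (b - 1)
        rw [betaWeight]
        gcongr
    _ = c ^ (-δ) * ρ ^ (b - 1 - δ) * betaWeight (a - δ) b (u / ρ) := by
        rw [betaWeight, Real.div_rpow hu.1.le hρ0.le, show a - δ - 1 = a - 1 + -δ by ring,
          Real.rpow_add hsub, sub_eq_add_neg (b - 1), Real.rpow_add hρ0]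
        field_simp

theorem intervalIntegrable_betaWeight_smul {E : Type*} [NormedAddCommGroup E] [NormedSpace ℝ E]
    (ha : 0 < a) (hb : 0 < b) {f : ℝ → E} (hf : Continuous f) {c d : ℝ}
    (hc : c ∈ Set.Icc (0 : ℝ) 1) (hd : d ∈ Set.Icc (0 : ℝ) 1) :
    IntervalIntegrable (fun u ↦ betaWeight a b u • f u) volume c d :=
  ((intervalIntegrable_betaWeight ha hb).mono_set (by
    rw [Set.uIcc_of_le zero_le_one]
    exact Set.uIcc_subset_Icc hc hd)).smul_continuousOn hf.continuousOn

theorem integral_betaWeight_mul_exp_le {ρ c δ : ℝ} (ha : a ≤ 1) (hb : 0 < b) (hδ0 : 0 ≤ δ)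
    (hδa : δ < a) (hc : 0 < c) (hρ0 : 0 < ρ) (hρ1 : ρ ≤ 1) :
    ∫ u in (0 : ℝ)..ρ, betaWeight a b u * Real.exp (-(c * (ρ - u))) ≤
      c ^ (-δ) * ρ ^ (b - δ) * ∫ u in (0 : ℝ)..1, betaWeight (a - δ) b u := by
  have hscaled : IntervalIntegrable (fun u ↦ betaWeight (a - δ) b (u / ρ)) volume 0 ρ := by
    have h := (intervalIntegrable_betaWeight (sub_pos.2 hδa) hb).comp_mul_right (c := ρ⁻¹)
    simpa only [zero_div, one_div, inv_inv, ← div_eq_mul_inv] using h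
  calc ∫ u in (0 : ℝ)..ρ, betaWeight a b u * Real.exp (-(c * (ρ - u)))
      ≤ ∫ u in (0 : ℝ)..ρ, c ^ (-δ) * ρ ^ (b - 1 - δ) * betaWeight (a - δ) b (u / ρ) :=
        intervalIntegral.integral_mono_on_of_le_Ioo hρ0.le
          (intervalIntegrable_betaWeight_smul (hδ0.trans_lt hδa) hb (by fun_prop) (by simp)
            ⟨hρ0.le, hρ1⟩) (hscaled.const_mul _)
          fun u hu ↦ betaWeight_mul_exp_le ha hδ0 (hδa.le.trans ha) hc hρ1 hu
    _ = c ^ (-δ) * ρ ^ (b - δ) * ∫ u in (0 : ℝ)..1, betaWeight (a - δ) b u := by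
        rw [intervalIntegral.integral_const_mul,
          intervalIntegral.integral_comp_div _ hρ0.ne', zero_div, div_self hρ0.ne', smul_eq_mul,
          show b - δ = b - 1 - δ + 1 by ring, Real.rpow_add_one hρ0.ne']
        ring

variable {α x : ℝ}

theorem intervalIntegrable_rpow_div_one_add_mul_rpow_sq (hα : 0 < α) (hx : 0 ≤ x) :
    IntervalIntegrable (fun v : ℝ ↦ x * v ^ (α - 1) / (1 + x * v ^ α) ^ 2) volume 0 1 := by
  have hcont : ContinuousOn (fun v : ℝ ↦ x / (1 + x * v ^ α) ^ 2) (Set.uIcc 0 1) := by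
    have := Real.continuous_rpow_const hα.le
    refine ContinuousOn.div continuousOn_const (by fun_prop) fun v hv ↦ ?_
    rw [Set.uIcc_of_le zero_le_one] at hv
    have := Real.rpow_nonneg hv.1 α
    positivity
  have hpow : IntervalIntegrable (fun v : ℝ ↦ v ^ (α - 1)) volume 0 1 :=
    intervalIntegral.intervalIntegrable_rpow' (by linarith)
  exact (hpow.mul_continuousOn hcont).congr fun v _ ↦ by ring

theorem integral_rpow_div_one_add_mul_rpow_sq (hα : 0 < α) (hx : 0 ≤ x) :
    ∫ v in (0 : ℝ)..1, x * v ^ (α - 1) / (1 + x * v ^ α) ^ 2 = α⁻¹ - α⁻¹ * (1 + x)⁻¹ := by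
  have hne : ∀ v : ℝ, 0 ≤ v → 1 + x * v ^ α ≠ 0 := fun v hv ↦ by positivity
  have hderiv : ∀ v ∈ Set.Ioo (0 : ℝ) 1, HasDerivAt (fun v : ℝ ↦ -α⁻¹ * (1 + x * v ^ α)⁻¹)
      (x * v ^ (α - 1) / (1 + x * v ^ α) ^ 2) v := fun v hv ↦ by
    have hpow := ((Real.hasDerivAt_rpow_const (p := α) (Or.inl hv.1.ne')).const_mul x).const_add 1
    refine ((hpow.fun_inv (hne v hv.1.le)).const_mul (-α⁻¹)).congr_deriv ?_
    field_simp
  have hcont : Continuous fun v : ℝ ↦ v ^ α := Real.continuous_rpow_const hα.le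
  rw [intervalIntegral.integral_eq_sub_of_hasDerivAt_of_le
    (f := fun v : ℝ ↦ -α⁻¹ * (1 + x * v ^ α)⁻¹) zero_le_one
    (continuousOn_const.mul (ContinuousOn.inv₀ (by fun_prop) fun v hv ↦ hne v hv.1)) hderiv
    (intervalIntegrable_rpow_div_one_add_mul_rpow_sq hα hx)]
  simp only [Real.one_rpow, Real.zero_rpow hα.ne', mul_one, mul_zero, add_zero, inv_one]
  ring

theorem rpow_le_two_of_half_le {p y : ℝ} (hy : 1 / 2 ≤ y) (hp0 : p ≤ 0) (hp1 : -1 ≤ p) :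
    y ^ p ≤ 2 :=
  calc y ^ p ≤ (1 / 2 : ℝ) ^ p := Real.rpow_le_rpow_of_nonpos (by norm_num) hy hp0
    _ ≤ (1 / 2 : ℝ) ^ (-1 : ℝ) := Real.rpow_le_rpow_of_exponent_ge (by norm_num) (by norm_num) hp1
    _ = 2 := by rw [Real.rpow_neg_one]; norm_num

-- Away from `u = 1` the quotient `x / (1 + x (1 - u) ^ α) ^ 2` is bounded, away from `u = 0` the
-- factor `u ^ (b - 1)` is.
theorem mul_betaWeight_div_le (hα1 : α ≤ 1) (hα0 : 0 ≤ α) (hb0 : 0 ≤ b) (hb1 : b ≤ 1)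
    (hx : 0 ≤ x) (hu : u ∈ Set.Ioo (0 : ℝ) 1) :
    x * betaWeight α b u / (1 + x * (1 - u) ^ α) ^ 2 ≤
      2 * betaWeight α b u + 2 * (x * (1 - u) ^ (α - 1) / (1 + x * (1 - u) ^ α) ^ 2) := by
  have hsub : 0 < 1 - u := sub_pos.2 hu.2
  have hweight := betaWeight_nonneg α b (Set.Ioo_subset_Icc_self hu)
  set v := (1 - u) ^ α with hv
  have hv0 : 0 < v := by positivity
  set f := x * (1 - u) ^ (α - 1) / (1 + x * v) ^ 2 with hf
  have hf0 : 0 ≤ f := by positivity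
  rcases le_total u (1 / 2) with h | h
  · have hvinv : v⁻¹ ≤ 2 := by
      rw [hv, ← Real.rpow_neg hsub.le]
      exact rpow_le_two_of_half_le (by linarith) (by linarith) (by linarith)
    have hquot : x / (1 + x * v) ^ 2 ≤ v⁻¹ := by
      rw [inv_eq_one_div, div_le_div_iff₀ (by positivity) hv0]
      nlinarith [mul_nonneg hx hv0.le, sq_nonneg (x * v)]
    calc x * betaWeight α b u / (1 + x * v) ^ 2
        = x / (1 + x * v) ^ 2 * betaWeight α b u := by ring
      _ ≤ 2 * betaWeight α b u := by gcongr; exact hquot.trans hvinv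
      _ ≤ 2 * betaWeight α b u + 2 * f := by linarith
  · calc x * betaWeight α b u / (1 + x * v) ^ 2 = u ^ (b - 1) * f := by rw [hf, betaWeight]; ring
      _ ≤ 2 * f := by gcongr; exact rpow_le_two_of_half_le h (by linarith) (by linarith)
      _ ≤ 2 * betaWeight α b u + 2 * f := by linarith

theorem intervalIntegrable_mul_betaWeight_div (hα0 : 0 < α) (hb0 : 0 < b) (hx : 0 ≤ x) :
    IntervalIntegrable (fun u ↦ x * betaWeight α b u / (1 + x * (1 - u) ^ α) ^ 2) volume 0 1 := by
  have hpow : Continuous fun v : ℝ ↦ v ^ α := Real.continuous_rpow_const hα0.le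
  have hcont : ContinuousOn (fun u : ℝ ↦ x / (1 + x * (1 - u) ^ α) ^ 2) (Set.uIcc 0 1) := by
    refine ContinuousOn.div continuousOn_const (by fun_prop) fun u hu ↦ ?_
    rw [Set.uIcc_of_le zero_le_one] at hu
    have := Real.rpow_nonneg (sub_nonneg.2 hu.2) α
    positivity
  exact ((intervalIntegrable_betaWeight hα0 hb0).mul_continuousOn hcont).congr fun u _ ↦ by ring

theorem integral_mul_betaWeight_div_le (hα0 : 0 < α) (hα1 : α ≤ 1) (hb0 : 0 < b) (hb1 : b ≤ 1)
    (hx : 0 ≤ x) :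
    ∫ u in (0 : ℝ)..1, x * betaWeight α b u / (1 + x * (1 - u) ^ α) ^ 2 ≤
      2 * (∫ u in (0 : ℝ)..1, betaWeight α b u) + 2 * α⁻¹ := by
  have hbeta := (intervalIntegrable_betaWeight hα0 hb0).const_mul 2
  have hquot := (intervalIntegrable_rpow_div_one_add_mul_rpow_sq hα0 hx).comp_sub_left 1
  rw [sub_self, sub_zero] at hquot
  calc ∫ u in (0 : ℝ)..1, x * betaWeight α b u / (1 + x * (1 - u) ^ α) ^ 2
      ≤ ∫ u in (0 : ℝ)..1, (2 * betaWeight α b u +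
          2 * (x * (1 - u) ^ (α - 1) / (1 + x * (1 - u) ^ α) ^ 2)) :=
        intervalIntegral.integral_mono_on_of_le_Ioo zero_le_one
          (intervalIntegrable_mul_betaWeight_div hα0 hb0 hx) (hbeta.add (hquot.symm.const_mul 2))
          fun u hu ↦ mul_betaWeight_div_le hα1 hα0.le hb0.le hb1 hx hu
    _ = 2 * (∫ u in (0 : ℝ)..1, betaWeight α b u) + 2 * (α⁻¹ - α⁻¹ * (1 + x)⁻¹) := by
        rw [intervalIntegral.integral_add hbeta (hquot.symm.const_mul 2),
          intervalIntegral.integral_const_mul, intervalIntegral.integral_const_mul,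
          intervalIntegral.integral_comp_sub_left
            (fun v : ℝ ↦ x * v ^ (α - 1) / (1 + x * v ^ α) ^ 2) 1, sub_self, sub_zero,
          integral_rpow_div_one_add_mul_rpow_sq hα0 hx]
    _ ≤ 2 * (∫ u in (0 : ℝ)..1, betaWeight α b u) + 2 * α⁻¹ := by
        gcongr
        exact sub_le_self _ (by positivity)

end BetaWeight

section ScaledConvolution

open scoped NNReal

variable {V W : Type*} [NormedAddCommGroup V] [NormedSpace ℝ V]
  [NormedAddCommGroup W] [NormedSpace ℝ W]

theorem continuous_intervalIntegral_smul {X : Type*} [TopologicalSpace X]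
    [FirstCountableTopology X] [WeaklyLocallyCompactSpace X] {p : ℝ → ℝ} {a b : ℝ}
    (hp : IntervalIntegrable p volume a b) {G : X → ℝ → V}
    (hG : Continuous (Function.uncurry G)) :
    Continuous fun x ↦ ∫ u in a..b, p u • G x u := by
  refine continuous_iff_continuousAt.2 fun x₀ ↦ ?_
  obtain ⟨N, hNc, hN⟩ := exists_compact_mem_nhds x₀
  obtain ⟨C, hC⟩ := (hNc.prod isCompact_uIcc).exists_bound_of_continuousOn
    (hG.continuousOn (s := N ×ˢ Set.uIcc a b))
  refine intervalIntegral.continuousAt_of_dominated_interval (bound := fun u ↦ ‖p u‖ * C)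
    (.of_forall fun x ↦ hp.def'.aestronglyMeasurable.smul
      (hG.comp (Continuous.prodMk_right x)).aestronglyMeasurable) ?_ (hp.norm.mul_const C)
    (.of_forall fun u _ ↦ ((hG.comp (Continuous.prodMk_left u)).const_smul _).continuousAt)
  filter_upwards [hN] with x hx
  refine .of_forall fun u hu ↦ ?_
  rw [norm_smul]
  gcongr
  exact hC (x, u) ⟨hx, Set.uIoc_subset_uIcc hu⟩

/-- `t ^ (1 - α) * ∫ τ in 0..t, (t - τ) ^ (α - 1) * K (t - τ) (τ ^ (β - 1) * F τ)`, rescaled to the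
unit interval by `τ = t * u`; this form is continuous up to `t = 0`. -/
noncomputable def scaledConvolution (α β : ℝ) (K : ℝ≥0 → V →L[ℝ] W) (F : ℝ≥0 → V) (t : ℝ≥0) : W :=
  (t : ℝ) ^ β • ∫ u in (0 : ℝ)..1,
    betaWeight α β u • K (t * (1 - u).toNNReal) (F (t * u.toNNReal))

variable {α β : ℝ} {K : ℝ≥0 → V →L[ℝ] W} {F : ℝ≥0 → V}

theorem continuous_scaledConvolution (hα : 0 < α) (hβ : 0 < β) (hK : Continuous K)
    (hF : Continuous F) : Continuous (scaledConvolution α β K F) := by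
  have hpow : Continuous fun t : ℝ≥0 ↦ (t : ℝ) ^ β :=
    (Real.continuous_rpow_const hβ.le).comp NNReal.continuous_coe
  refine hpow.smul (continuous_intervalIntegral_smul (intervalIntegrable_betaWeight hα hβ) ?_)
  simp only [Function.uncurry_def]
  fun_prop

theorem intervalIntegrable_scaledConvolution (hα : 0 < α) (hβ : 0 < β) (hK : Continuous K)
    (hF : Continuous F) (t : ℝ≥0) {c d : ℝ} (hc : c ∈ Set.Icc (0 : ℝ) 1)
    (hd : d ∈ Set.Icc (0 : ℝ) 1) :
    IntervalIntegrable (fun u ↦ betaWeight α β u • K (t * (1 - u).toNNReal) (F (t * u.toNNReal)))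
      volume c d :=
  intervalIntegrable_betaWeight_smul hα hβ (by fun_prop) hc hd

theorem scaledConvolution_add (hα : 0 < α) (hβ : 0 < β) (hK : Continuous K) {F G : ℝ≥0 → V}
    (hF : Continuous F) (hG : Continuous G) (t : ℝ≥0) :
    scaledConvolution α β K (fun s ↦ F s + G s) t =
      scaledConvolution α β K F t + scaledConvolution α β K G t := by
  simp only [scaledConvolution, map_add, smul_add]
  rw [intervalIntegral.integral_add
    (intervalIntegrable_scaledConvolution hα hβ hK hF t (by simp) (by simp))
    (intervalIntegrable_scaledConvolution hα hβ hK hG t (by simp) (by simp)), smul_add]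

theorem scaledConvolution_smul (α β c : ℝ) (K : ℝ≥0 → V →L[ℝ] W) (F : ℝ≥0 → V) (t : ℝ≥0) :
    scaledConvolution α β K (fun s ↦ c • F s) t = c • scaledConvolution α β K F t := by
  simp only [scaledConvolution, map_smul, smul_comm _ c, intervalIntegral.integral_smul]

variable {t m : ℝ≥0} {C A γ δ ρ : ℝ}

theorem norm_integral_head_le (hα1 : α ≤ 1) (hβ : 0 < β) (hδ0 : 0 ≤ δ) (hδα : δ < α) (hγ : 0 < γ)
    (ht : 0 < t) (hρ0 : 0 < ρ) (hρ1 : ρ ≤ 1) (hK : ∀ r, ‖K r‖ ≤ C)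
    (hF : ∀ s : ℝ≥0, (s : ℝ) ≤ t * ρ → ‖F s‖ ≤ A * Real.exp (γ * s)) :
    ‖∫ u in (0 : ℝ)..ρ, betaWeight α β u • K (t * (1 - u).toNNReal) (F (t * u.toNNReal))‖ ≤
      C * A * Real.exp (γ * (t * ρ)) *
        ((γ * t) ^ (-δ) * ρ ^ (β - δ) * ∫ u in (0 : ℝ)..1, betaWeight (α - δ) β u) := by
  have hα0 : 0 < α := hδ0.trans_lt hδα
  have hC : 0 ≤ C := (norm_nonneg _).trans (hK 0)
  have hA : 0 ≤ A := by
    simpa using (norm_nonneg _).trans (hF 0 (by rw [NNReal.coe_zero]; positivity))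
  have hbound : ∀ u ∈ Set.Ioc 0 ρ,
      ‖betaWeight α β u • K (t * (1 - u).toNNReal) (F (t * u.toNNReal))‖ ≤
        C * A * Real.exp (γ * (t * ρ)) * (betaWeight α β u * Real.exp (-(γ * t * (ρ - u)))) :=
    fun u hu ↦ by
    have hu1 : u ∈ Set.Icc (0 : ℝ) 1 := ⟨hu.1.le, hu.2.trans hρ1⟩
    have hFu : ‖F (t * u.toNNReal)‖ ≤ A * Real.exp (γ * (t * u)) := by
      simpa [hu.1.le] using hF (t * u.toNNReal) (by simpa [hu.1.le, ht] using hu.2)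
    have hw := betaWeight_nonneg α β hu1
    calc ‖betaWeight α β u • K (t * (1 - u).toNNReal) (F (t * u.toNNReal))‖
        ≤ betaWeight α β u * (C * (A * Real.exp (γ * (t * u)))) := by
          rw [norm_smul, Real.norm_of_nonneg hw]
          gcongr
          exact (K _).le_of_opNorm_le_of_le (hK _) hFu
      _ = _ := by
          rw [show γ * (t * u) = γ * (t * ρ) + -(γ * t * (ρ - u)) by ring, Real.exp_add]
          ring
  have hint : IntervalIntegrable (fun u ↦ betaWeight α β u * Real.exp (-(γ * t * (ρ - u))))
      volume 0 ρ :=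
    intervalIntegrable_betaWeight_smul hα0 hβ (by fun_prop) (by simp) ⟨hρ0.le, hρ1⟩
  refine (intervalIntegral.norm_integral_le_of_norm_le hρ0.le (.of_forall hbound)
    (hint.const_mul _)).trans ?_
  rw [intervalIntegral.integral_const_mul]
  gcongr
  exact integral_betaWeight_mul_exp_le hα1 hβ hδ0 hδα (by positivity) hρ0 hρ1

theorem norm_rpow_smul_integral_tail_le (hα0 : 0 < α) (hα1 : α ≤ 1) (hC : 0 ≤ C) (hA : 0 ≤ A)
    (ht : 0 < t) (hρ0 : 0 ≤ ρ) (hρ1 : ρ ≤ 1)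
    (hK : ∀ r : ℝ≥0, ‖K r‖ ≤ C / (1 + (r : ℝ) ^ α) ^ 2)
    (hF : ∀ s : ℝ≥0, t * ρ < s → s ≤ t → ‖F s‖ ≤ A) :
    ‖(t : ℝ) ^ α •
      ∫ u in ρ..1, betaWeight α α u • K (t * (1 - u).toNNReal) (F (t * u.toNNReal))‖ ≤
      C * A * (2 * (∫ u in (0 : ℝ)..1, betaWeight α α u) + 2 * α⁻¹) := by
  set x : ℝ := (t : ℝ) ^ α
  have hx : 0 ≤ x := by positivity
  have hbound : ∀ u ∈ Set.Ioc ρ 1,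
      ‖x • betaWeight α α u • K (t * (1 - u).toNNReal) (F (t * u.toNNReal))‖ ≤
        C * A * (x * betaWeight α α u / (1 + x * (1 - u) ^ α) ^ 2) := fun u hu ↦ by
    have hu0 : 0 ≤ u := hρ0.trans hu.1.le
    have hw := betaWeight_nonneg α α ⟨hu0, hu.2⟩
    have hFu : ‖F (t * u.toNNReal)‖ ≤ A :=
      hF _ (by simpa [hu0, ht] using hu.1) (mul_le_of_le_one_right' (by simpa using hu.2))
    have hKu : ‖K (t * (1 - u).toNNReal)‖ ≤ C / (1 + x * (1 - u) ^ α) ^ 2 := by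
      simpa [Real.mul_rpow, hu.2, x] using hK (t * (1 - u).toNNReal)
    calc ‖x • betaWeight α α u • K (t * (1 - u).toNNReal) (F (t * u.toNNReal))‖
        ≤ x * (betaWeight α α u * (C / (1 + x * (1 - u) ^ α) ^ 2 * A)) := by
          rw [norm_smul, norm_smul, Real.norm_of_nonneg hx, Real.norm_of_nonneg hw]
          gcongr
          exact (K _).le_of_opNorm_le_of_le hKu hFu
      _ = _ := by ring
  have hint := (intervalIntegrable_mul_betaWeight_div hα0 hα0 hx).const_mul (C * A)
  have hnonneg : ∀ u ∈ Set.Ioc (0 : ℝ) 1,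
      0 ≤ C * A * (x * betaWeight α α u / (1 + x * (1 - u) ^ α) ^ 2) := fun u hu ↦ by
    have := betaWeight_nonneg α α (Set.Ioc_subset_Icc_self hu)
    positivity
  rw [← intervalIntegral.integral_smul]
  calc ‖∫ u in ρ..1, x • betaWeight α α u • K (t * (1 - u).toNNReal) (F (t * u.toNNReal))‖
      ≤ ∫ u in ρ..1, C * A * (x * betaWeight α α u / (1 + x * (1 - u) ^ α) ^ 2) :=
        intervalIntegral.norm_integral_le_of_norm_le hρ1 (.of_forall hbound)
          (hint.mono_set (Set.uIcc_subset_uIcc (by simp [hρ0, hρ1]) (by simp)))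
    _ ≤ ∫ u in (0 : ℝ)..1, C * A * (x * betaWeight α α u / (1 + x * (1 - u) ^ α) ^ 2) :=
        intervalIntegral.integral_mono_interval hρ0 hρ1 le_rfl
          ((ae_restrict_iff' measurableSet_Ioc).2 (.of_forall hnonneg)) hint
    _ ≤ C * A * (2 * (∫ u in (0 : ℝ)..1, betaWeight α α u) + 2 * α⁻¹) := by
        rw [intervalIntegral.integral_const_mul]
        gcongr
        exact integral_mul_betaWeight_div_le hα0 hα1 hα0 hα1 hx

theorem scaledConvolution_zero_right (hβ : β ≠ 0) (K : ℝ≥0 → V →L[ℝ] W) (F : ℝ≥0 → V) :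
    scaledConvolution α β K F 0 = 0 := by
  simp [scaledConvolution, Real.zero_rpow hβ]

theorem norm_scaledConvolution_le (hα0 : 0 < α) (hα1 : α ≤ 1) (hC : 0 ≤ C) (hA : 0 ≤ A)
    (hK : ∀ r : ℝ≥0, ‖K r‖ ≤ C / (1 + (r : ℝ) ^ α) ^ 2) (hF : ∀ s, ‖F s‖ ≤ A) (t : ℝ≥0) :
    ‖scaledConvolution α α K F t‖ ≤
      C * A * (2 * (∫ u in (0 : ℝ)..1, betaWeight α α u) + 2 * α⁻¹) := by
  rcases eq_zero_or_pos t with rfl | ht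
  · have := integral_betaWeight_nonneg α α
    rw [scaledConvolution_zero_right hα0.ne', norm_zero]
    positivity
  · exact norm_rpow_smul_integral_tail_le hα0 hα1 hC hA ht le_rfl zero_le_one hK fun s _ _ ↦ hF s

theorem rpow_mul_rpow_neg_mul_div_rpow {c x y : ℝ} (hc : 0 ≤ c) (hx : 0 ≤ x) (hy : 0 < y) :
    y ^ α * ((c * y) ^ (-δ) * (x / y) ^ (α - δ)) = c ^ (-δ) * x ^ (α - δ) := by
  rw [Real.mul_rpow hc hy.le, Real.div_rpow hx hy.le, Real.rpow_sub hy, Real.rpow_neg hy.le]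
  field_simp

-- The mass up to `m` is damped by the factor `γ ^ (-δ)`, the mass after `m` by the size of `F`.
theorem norm_scaledConvolution_le_of_le_exp {A₁ A₂ : ℝ} (hα1 : α ≤ 1) (hδ0 : 0 ≤ δ)
    (hδα : δ < α) (hγ : 0 < γ) (hC : 0 ≤ C) (hA₂ : 0 ≤ A₂) (hKc : Continuous K) (hFc : Continuous F)
    (hK : ∀ r : ℝ≥0, ‖K r‖ ≤ C / (1 + (r : ℝ) ^ α) ^ 2) (hm : 0 < m) (hmt : m ≤ t)
    (hhead : ∀ s ≤ m, ‖F s‖ ≤ A₁ * Real.exp (γ * s))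
    (htail : ∀ s, m < s → s ≤ t → ‖F s‖ ≤ A₂) :
    ‖scaledConvolution α α K F t‖ ≤
      C * A₁ * Real.exp (γ * m) *
          (γ ^ (-δ) * (m : ℝ) ^ (α - δ) * ∫ u in (0 : ℝ)..1, betaWeight (α - δ) α u) +
        C * A₂ * (2 * (∫ u in (0 : ℝ)..1, betaWeight α α u) + 2 * α⁻¹) := by
  have hα0 : 0 < α := hδ0.trans_lt hδα
  have ht : 0 < t := hm.trans_le hmt
  have hρ0 : 0 < (m / t : ℝ) := by positivity
  have hρ1 : (m / t : ℝ) ≤ 1 := div_le_one_of_le₀ (mod_cast hmt) t.coe_nonneg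
  have htρ : (t * (m / t) : ℝ) = m := mul_div_cancel₀ _ (by positivity)
  have hKC : ∀ r, ‖K r‖ ≤ C := fun r ↦ (hK r).trans (div_le_self hC (one_le_pow₀ (by
    have : (0 : ℝ) ≤ (r : ℝ) ^ α := by positivity
    linarith)))
  have hhead' := norm_integral_head_le hα1 hα0 hδ0 hδα hγ ht hρ0 hρ1 hKC
    (F := F) (A := A₁) fun s hs ↦ hhead s (by rwa [htρ, NNReal.coe_le_coe] at hs)
  have hsplit := intervalIntegral.integral_add_adjacent_intervals
    (intervalIntegrable_scaledConvolution hα0 hα0 hKc hFc t (Set.left_mem_Icc.2 zero_le_one)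
      ⟨hρ0.le, hρ1⟩)
    (intervalIntegrable_scaledConvolution hα0 hα0 hKc hFc t ⟨hρ0.le, hρ1⟩
      (Set.right_mem_Icc.2 zero_le_one))
  rw [scaledConvolution, ← hsplit, smul_add]
  refine (norm_add_le _ _).trans (add_le_add ?_
    (norm_rpow_smul_integral_tail_le hα0 hα1 hC hA₂ ht hρ0.le hρ1 hK fun s hs hst ↦
      htail s (by rwa [htρ, NNReal.coe_lt_coe] at hs) hst))
  rw [norm_smul, Real.norm_of_nonneg (by positivity),
    ← rpow_mul_rpow_neg_mul_div_rpow hγ.le m.coe_nonneg (NNReal.coe_pos.2 ht)]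
  rw [htρ] at hhead'
  exact (mul_le_mul_of_nonneg_left hhead' (by positivity)).trans_eq (by ring)

end ScaledConvolution

section FixedPoint

open scoped NNReal BoundedContinuousFunction ZeroAtInfty

variable {V : Type*} [NormedAddCommGroup V] [NormedSpace ℝ V] {α C : ℝ} {K : ℝ≥0 → V →L[ℝ] V}

theorem exists_forall_norm_le_of_zeroAtInfty {E : Type*} [NormedAddCommGroup E] (f : C₀(ℝ≥0, E))
    {ε : ℝ} (hε : 0 < ε) : ∃ T > 0, ∀ s ≥ T, ‖f s‖ ≤ ε := by
  have hf : ∀ᶠ s in atTop, ‖f s‖ < ε := by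
    have h := (zero_at_infty f).norm
    rw [cocompact_eq_atTop, norm_zero] at h
    exact h.eventually_lt_const hε
  obtain ⟨T, hT⟩ := eventually_atTop.1 hf
  exact ⟨T + 1, by positivity, fun s hs ↦ (hT s (le_self_add.trans hs)).le⟩

theorem norm_zeroAtInfty_apply_le {X E : Type*} [TopologicalSpace X] [NormedAddCommGroup E]
    (f : C₀(X, E)) (x : X) : ‖f x‖ ≤ ‖f‖ :=
  f.toBCF.norm_coe_le_norm x

theorem exists_mul_rpow_neg_le {δ ε : ℝ} (hδ : 0 < δ) (hε : 0 < ε) (B : ℝ) :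
    ∃ γ > 0, B * γ ^ (-δ) ≤ ε := by
  have h : Tendsto (fun γ : ℝ ↦ B * γ ^ (-δ)) atTop (𝓝 0) := by
    simpa using (tendsto_rpow_neg_atTop hδ).const_mul B
  exact ((eventually_gt_atTop 0).and (h.eventually_le_const hε)).exists

theorem norm_scaledConvolution_le_of_le_exp_min {δ γ q ε D : ℝ} {T : ℝ≥0}
    {Q : ℝ≥0 → V →L[ℝ] V} {z : ℝ≥0 → V} (hα1 : α ≤ 1) (hδ0 : 0 ≤ δ) (hδα : δ < α) (hγ : 0 < γ)
    (hC : 0 ≤ C) (hT0 : 0 < T) (hD : 0 ≤ D) (hKc : Continuous K) (hQc : Continuous Q)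
    (hzc : Continuous z) (hK : ∀ r : ℝ≥0, ‖K r‖ ≤ C / (1 + (r : ℝ) ^ α) ^ 2)
    (hQ : ∀ s, ‖Q s‖ ≤ q) (hQT : ∀ s ≥ T, ‖Q s‖ ≤ ε)
    (hz : ∀ s, ‖z s‖ ≤ D * Real.exp (γ * min s T)) (t : ℝ≥0) :
    ‖scaledConvolution α α K (fun s ↦ Q s (z s)) t‖ ≤
      (C * q * (T : ℝ) ^ (α - δ) * (∫ u in (0 : ℝ)..1, betaWeight (α - δ) α u) * γ ^ (-δ) +
        C * ε * (2 * (∫ u in (0 : ℝ)..1, betaWeight α α u) + 2 * α⁻¹)) *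
        (D * Real.exp (γ * min t T)) := by
  have hα0 : 0 < α := hδ0.trans_lt hδα
  have hB₁ := integral_betaWeight_nonneg (α - δ) α
  have hB₂ := integral_betaWeight_nonneg α α
  have hq : 0 ≤ q := (norm_nonneg _).trans (hQ 0)
  have hε : 0 ≤ ε := (norm_nonneg _).trans (hQT T le_rfl)
  rcases eq_zero_or_pos t with rfl | ht
  · rw [scaledConvolution_zero_right hα0.ne', norm_zero]
    positivity
  have hhead : ∀ s ≤ min t T, ‖Q s (z s)‖ ≤ q * D * Real.exp (γ * s) := fun s hs ↦ by
    have h := (Q s).le_of_opNorm_le_of_le (hQ s) (hz s)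
    rwa [min_eq_left (hs.trans (min_le_right _ _)), ← mul_assoc] at h
  have htail : ∀ s, min t T < s → s ≤ t → ‖Q s (z s)‖ ≤ ε * (D * Real.exp (γ * min t T)) :=
    fun s hs hst ↦ by
    have hTs : T < s := (min_lt_iff.1 hs).resolve_left hst.not_gt
    have h := (Q s).le_of_opNorm_le_of_le (hQT s hTs.le) (hz s)
    rwa [min_eq_right hTs.le, ← min_eq_right (hTs.le.trans hst)] at h
  refine (norm_scaledConvolution_le_of_le_exp hα1 hδ0 hδα hγ hC (by positivity) hKc
    (hQc.clm_apply hzc) hK (lt_min ht hT0) (min_le_left _ _) hhead htail).trans ?_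
  have hmin : ((min t T : ℝ≥0) : ℝ) ^ (α - δ) ≤ (T : ℝ) ^ (α - δ) :=
    Real.rpow_le_rpow (NNReal.coe_nonneg _) (NNReal.coe_le_coe.2 (min_le_right _ _))
      (sub_nonneg.2 hδα.le)
  calc _ ≤ C * (q * D) * Real.exp (γ * min t T) *
            (γ ^ (-δ) * (T : ℝ) ^ (α - δ) * ∫ u in (0 : ℝ)..1, betaWeight (α - δ) α u) +
          C * (ε * (D * Real.exp (γ * min t T))) *
            (2 * (∫ u in (0 : ℝ)..1, betaWeight α α u) + 2 * α⁻¹) := by gcongr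
    _ = _ := by ring

-- Past `T` the smallness of `Q` gives the contraction, before `T` the growth rate `γ` does.
theorem exists_scaledConvolution_contraction (hα0 : 0 < α) (hα1 : α ≤ 1) (hC : 0 ≤ C)
    (hKc : Continuous K) (hK : ∀ r : ℝ≥0, ‖K r‖ ≤ C / (1 + (r : ℝ) ^ α) ^ 2)
    (Q : C₀(ℝ≥0, V →L[ℝ] V)) :
    ∃ γ > 0, ∃ T : ℝ≥0, ∀ (D : ℝ) (z : ℝ≥0 → V), 0 ≤ D → Continuous z →
      (∀ s, ‖z s‖ ≤ D * Real.exp (γ * min s T)) → ∀ t,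
        ‖scaledConvolution α α K (fun s ↦ Q s (z s)) t‖ ≤ D / 2 * Real.exp (γ * min t T) := by
  set B := 2 * (∫ u in (0 : ℝ)..1, betaWeight α α u) + 2 * α⁻¹
  have hB : 0 ≤ B := by
    have := integral_betaWeight_nonneg α α
    positivity
  obtain ⟨T, hT0, hT⟩ := exists_forall_norm_le_of_zeroAtInfty Q
    (ε := 1 / (4 * (C * B + 1))) (by positivity)
  obtain ⟨γ, hγ0, hγ⟩ := exists_mul_rpow_neg_le (half_pos hα0) (ε := 1 / 4) (by norm_num)
    (C * ‖Q‖ * (T : ℝ) ^ (α - α / 2) * ∫ u in (0 : ℝ)..1, betaWeight (α - α / 2) α u)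
  have htail : C * (1 / (4 * (C * B + 1))) * B ≤ 1 / 4 := by
    rw [mul_one_div, div_mul_eq_mul_div, div_le_div_iff₀ (by positivity) (by norm_num)]
    linarith
  refine ⟨γ, hγ0, T, fun D z hD hzc hz t ↦ (norm_scaledConvolution_le_of_le_exp_min hα1
    (half_pos hα0).le (half_lt_self hα0) hγ0 hC hT0 hD hKc (map_continuous Q) hzc hK
    (norm_zeroAtInfty_apply_le Q) hT hz t).trans ?_⟩
  calc _ ≤ (1 / 4 + 1 / 4) * (D * Real.exp (γ * min t T)) := by gcongr
    _ = D / 2 * Real.exp (γ * min t T) := by ring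

theorem isUnit_one_sub_of_norm_pow_lt_one {R : Type*} [NormedRing R] [HasSummableGeomSeries R]
    {x : R} {n : ℕ} (h : ‖x ^ n‖ < 1) : IsUnit (1 - x) := by
  have hcomm : Commute (1 - x) (∑ i ∈ Finset.range n, x ^ i) :=
    (mul_neg_geom_sum x n).trans (geom_sum_mul_neg x n).symm
  have hunit := isUnit_one_sub_of_norm_lt_one h
  rw [← mul_neg_geom_sum, hcomm.isUnit_mul_iff] at hunit
  exact hunit.1

theorem exists_clm_scaledConvolution (hα0 : 0 < α) (hα1 : α ≤ 1) (hC : 0 ≤ C)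
    (hKc : Continuous K) (hK : ∀ r : ℝ≥0, ‖K r‖ ≤ C / (1 + (r : ℝ) ^ α) ^ 2)
    (Q : C₀(ℝ≥0, V →L[ℝ] V)) :
    ∃ L : (ℝ≥0 →ᵇ V) →L[ℝ] (ℝ≥0 →ᵇ V),
      ∀ z t, L z t = scaledConvolution α α K (fun s ↦ Q s (z s)) t := by
  set B := 2 * (∫ u in (0 : ℝ)..1, betaWeight α α u) + 2 * α⁻¹
  have hB : 0 ≤ B := by
    have := integral_betaWeight_nonneg α α
    positivity
  have hcont : ∀ z : ℝ≥0 →ᵇ V, Continuous fun s ↦ Q s (z s) := fun z ↦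
    (map_continuous Q).clm_apply z.continuous
  have hbound : ∀ (z : ℝ≥0 →ᵇ V) t,
      ‖scaledConvolution α α K (fun s ↦ Q s (z s)) t‖ ≤ C * (‖Q‖ * ‖z‖) * B := fun z t ↦
    norm_scaledConvolution_le hα0 hα1 hC (by positivity) hK
      (fun s ↦ (Q s).le_of_opNorm_le_of_le (norm_zeroAtInfty_apply_le Q s) (z.norm_coe_le_norm s)) t
  let L₀ : (ℝ≥0 →ᵇ V) →ₗ[ℝ] (ℝ≥0 →ᵇ V) :=
    { toFun z := .ofNormedAddCommGroup _
        (continuous_scaledConvolution hα0 hα0 hKc (hcont z)) _ (hbound z)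
      map_add' y z := by
        ext1 t
        simpa using scaledConvolution_add hα0 hα0 hKc (hcont y) (hcont z) t
      map_smul' c z := by
        ext1 t
        simpa using scaledConvolution_smul α α c K (fun s ↦ Q s (z s)) t }
  refine ⟨L₀.mkContinuous (C * ‖Q‖ * B) fun z ↦ ?_, fun z t ↦ rfl⟩
  exact (BoundedContinuousFunction.norm_le (by positivity)).2 fun t ↦
    (hbound z t).trans_eq (by ring)

theorem exists_norm_pow_lt_one_of_weighted_contraction {X : Type*} [TopologicalSpace X]
    [Nonempty X] {L : (X →ᵇ V) →L[ℝ] (X →ᵇ V)} {w : X → ℝ} {M : ℝ} (hw1 : ∀ x, 1 ≤ w x)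
    (hwM : ∀ x, w x ≤ M)
    (hL : ∀ (D : ℝ) (z : X →ᵇ V), 0 ≤ D → (∀ x, ‖z x‖ ≤ D * w x) → ∀ x, ‖L z x‖ ≤ D / 2 * w x) :
    ∃ n, ‖L ^ n‖ < 1 := by
  have hM : 0 ≤ M :=
    let ⟨x⟩ := ‹Nonempty X›
    zero_le_one.trans ((hw1 x).trans (hwM x))
  have hiter : ∀ (n : ℕ) (z : X →ᵇ V) t, ‖(L ^ n) z t‖ ≤ ‖z‖ / 2 ^ n * w t := fun n z ↦ by
    induction n with
    | zero =>
      intro t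
      simpa using (z.norm_coe_le_norm t).trans (le_mul_of_one_le_right (norm_nonneg z) (hw1 t))
    | succ n ih =>
      rw [pow_succ' L, pow_succ, ← div_div]
      exact hL _ _ (by positivity) ih
  have hnorm : ∀ n : ℕ, ‖L ^ n‖ ≤ (1 / 2) ^ n * M := fun n ↦
    ContinuousLinearMap.opNorm_le_bound _ (by positivity) fun z ↦
      (BoundedContinuousFunction.norm_le (by positivity)).2 fun t ↦
        calc ‖(L ^ n) z t‖ ≤ ‖z‖ / 2 ^ n * w t := hiter n z t
          _ ≤ ‖z‖ / 2 ^ n * M := by gcongr; exact hwM t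
          _ = (1 / 2) ^ n * M * ‖z‖ := by rw [one_div_pow]; ring
  have hlim : Tendsto (fun n : ℕ ↦ (1 / 2 : ℝ) ^ n * M) atTop (𝓝 0) := by
    simpa using (tendsto_pow_atTop_nhds_zero_of_lt_one (r := (1 / 2 : ℝ)) (by norm_num)
      (by norm_num)).mul_const M
  obtain ⟨n, hn⟩ := (hlim.eventually_lt_const one_pos).exists
  exact ⟨n, (hnorm n).trans_lt hn⟩

theorem existsUnique_eq_add_scaledConvolution [CompleteSpace V] (hα0 : 0 < α) (hα1 : α ≤ 1)
    (hC : 0 ≤ C) (hKc : Continuous K) (hK : ∀ r : ℝ≥0, ‖K r‖ ≤ C / (1 + (r : ℝ) ^ α) ^ 2)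
    (Q : C₀(ℝ≥0, V →L[ℝ] V)) (h : ℝ≥0 →ᵇ V) :
    ∃! z : ℝ≥0 →ᵇ V, ∀ t, z t = h t + scaledConvolution α α K (fun s ↦ Q s (z s)) t := by
  obtain ⟨L, hL⟩ := exists_clm_scaledConvolution hα0 hα1 hC hKc hK Q
  obtain ⟨γ, hγ, T, hcontr⟩ := exists_scaledConvolution_contraction hα0 hα1 hC hKc hK Q
  obtain ⟨n, hn⟩ := exists_norm_pow_lt_one_of_weighted_contraction (L := L)
    (w := fun s : ℝ≥0 ↦ Real.exp (γ * min s T)) (M := Real.exp (γ * T))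
    (fun s ↦ Real.one_le_exp (by positivity)) (fun s ↦ by gcongr; exact min_le_right _ _)
    (fun D z hD hz t ↦ hL z t ▸ hcontr D z hD z.continuous hz t)
  have hbij := ContinuousLinearMap.isUnit_iff_bijective.1 (isUnit_one_sub_of_norm_pow_lt_one hn)
  refine (existsUnique_congr fun z ↦ ?_).1 (hbij.existsUnique h)
  simp only [← hL, ← BoundedContinuousFunction.add_apply, ← DFunLike.ext_iff]
  simp [sub_eq_iff_eq_add]

end FixedPoint

section VariationOfConstants

open scoped NNReal BoundedContinuousFunction ZeroAtInfty

variable {V W : Type*} [NormedAddCommGroup V] [NormedSpace ℝ V]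
  [NormedAddCommGroup W] [NormedSpace ℝ W] {α β : ℝ}

theorem rpow_one_sub_mul_rpow_sub_one {t : ℝ} (ht : 0 < t) (α : ℝ) :
    t ^ (1 - α) * t ^ (α - 1) = 1 := by
  rw [← Real.rpow_add ht, sub_add_sub_cancel', sub_self, Real.rpow_zero]

theorem rpow_mul_betaWeight_mul_rpow {t u : ℝ} (ht : 0 < t) (hu : u ∈ Set.Ioc (0 : ℝ) 1) :
    t ^ β * betaWeight α β u * (t * u) ^ (1 - β) = t ^ (1 - α) * t * (t - t * u) ^ (α - 1) := by
  have hu1 : 0 ≤ 1 - u := sub_nonneg.2 hu.2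
  have huβ := rpow_one_sub_mul_rpow_sub_one hu.1 β
  have htα := rpow_one_sub_mul_rpow_sub_one ht α
  have htβ : t ^ β * t ^ (1 - β) = t := by
    rw [← Real.rpow_add ht, add_sub_cancel, Real.rpow_one]
  calc t ^ β * betaWeight α β u * (t * u) ^ (1 - β)
      = (t ^ β * t ^ (1 - β)) * (u ^ (1 - β) * u ^ (β - 1)) * (1 - u) ^ (α - 1) := by
        rw [betaWeight, Real.mul_rpow ht.le hu.1.le]
        ring
    _ = t ^ (1 - α) * t ^ (α - 1) * t * (1 - u) ^ (α - 1) := by rw [htβ, huβ, htα]; ring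
    _ = t ^ (1 - α) * t * (t - t * u) ^ (α - 1) := by
        rw [← mul_one_sub, Real.mul_rpow ht.le hu1]
        ring

theorem scaledConvolution_eq_rpow_smul_integral {t : ℝ≥0} (ht : 0 < t) (K : ℝ → V →L[ℝ] W)
    {f : ℝ → V} {F : ℝ≥0 → V} (hF : ∀ s : ℝ≥0, 0 < s → F s = (s : ℝ) ^ (1 - β) • f s) :
    scaledConvolution α β (fun r ↦ K r) F t =
      (t : ℝ) ^ (1 - α) • ∫ τ in (0 : ℝ)..t, (t - τ) ^ (α - 1) • K (t - τ) (f τ) := by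
  have hsubst := intervalIntegral.smul_integral_comp_mul_left (a := 0) (b := 1)
    (fun τ ↦ (t - τ) ^ (α - 1) • K (t - τ) (f τ)) (t : ℝ)
  rw [mul_zero, mul_one] at hsubst
  rw [scaledConvolution, ← hsubst, ← intervalIntegral.integral_smul,
    ← intervalIntegral.integral_smul, ← intervalIntegral.integral_smul]
  refine intervalIntegral.integral_congr_ae (.of_forall fun u hu ↦ ?_)
  rw [Set.uIoc_of_le zero_le_one] at hu
  have hu1 : 0 ≤ 1 - u := sub_nonneg.2 hu.2
  have hFu : F (t * u.toNNReal) = ((t : ℝ) * u) ^ (1 - β) • f (t * u) := by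
    simpa [hu.1.le] using hF (t * u.toNNReal) (by simpa [ht] using hu.1)
  have hKu : K ((t * (1 - u).toNNReal : ℝ≥0) : ℝ) = K (t - t * u) := by
    rw [NNReal.coe_mul, Real.coe_toNNReal _ hu1, mul_one_sub]
  rw [hFu, hKu, map_smul]
  simp only [smul_smul, ← mul_assoc]
  rw [rpow_mul_betaWeight_mul_rpow (NNReal.coe_pos.2 ht) hu]

theorem norm_scaledConvolution_one_le {t : ℝ≥0} (ht : 0 < t) (K : ℝ → V →L[ℝ] W) (g : ℝ → V) :
    ‖scaledConvolution α 1 (fun r ↦ K r) (fun s ↦ g s) t‖ ≤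
      (t : ℝ) ^ (1 - α) * ∫ τ in (0 : ℝ)..t, (t - τ) ^ (α - 1) * ‖K (t - τ) (g τ)‖ := by
  rw [scaledConvolution_eq_rpow_smul_integral ht K (f := g) (by simp), norm_smul,
    Real.norm_of_nonneg (by positivity)]
  gcongr
  refine (intervalIntegral.norm_integral_le_integral_norm t.coe_nonneg).trans_eq
    (intervalIntegral.integral_congr fun τ hτ ↦ ?_)
  rw [Set.uIcc_of_le t.coe_nonneg] at hτ
  simp only [norm_smul, Real.norm_of_nonneg (Real.rpow_nonneg (sub_nonneg.2 hτ.2) _)]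

/-- The right-hand side of the variation-of-constants formula for a fractional equation
`D^α x = A x + Q(t) x + g(t)`, where `K r` stands for `E_{α,α}(r^α A)`. -/
noncomputable def variationOfConstants (α : ℝ) (K : ℝ → V →L[ℝ] W) (Q : ℝ → V →L[ℝ] V) (g : ℝ → V)
    (x₀ : V) (φ : ℝ → V) (t : ℝ) : W :=
  t ^ (α - 1) • K t x₀ + (∫ τ in (0 : ℝ)..t, (t - τ) ^ (α - 1) • K (t - τ) (Q τ (φ τ))) +
    ∫ τ in (0 : ℝ)..t, (t - τ) ^ (α - 1) • K (t - τ) (g τ)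

theorem rpow_smul_variationOfConstants {t : ℝ≥0} (ht : 0 < t) (K : ℝ → V →L[ℝ] W)
    (Q : ℝ → V →L[ℝ] V) (g : ℝ → V) (x₀ : V) {φ : ℝ → V} {z : ℝ≥0 → V}
    (hz : ∀ s : ℝ≥0, 0 < s → z s = (s : ℝ) ^ (1 - α) • φ s) :
    (t : ℝ) ^ (1 - α) • variationOfConstants α K Q g x₀ φ t =
      K t x₀ + scaledConvolution α 1 (fun r ↦ K r) (fun s ↦ g s) t +
        scaledConvolution α α (fun r ↦ K r) (fun s ↦ Q s (z s)) t := by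
  rw [scaledConvolution_eq_rpow_smul_integral ht K (f := g) (by simp),
    scaledConvolution_eq_rpow_smul_integral ht K (f := fun τ ↦ Q τ (φ τ))
      fun s hs ↦ by rw [hz s hs, map_smul],
    variationOfConstants, smul_add, smul_add, smul_smul,
    rpow_one_sub_mul_rpow_sub_one (NNReal.coe_pos.2 ht), one_smul, add_right_comm]

theorem continuous_nnreal_of_continuousOn_Ici {X : Type*} [TopologicalSpace X] {f : ℝ → X}
    (hf : ContinuousOn f (Set.Ici 0)) : Continuous fun t : ℝ≥0 ↦ f t :=
  hf.comp_continuous NNReal.continuous_coe NNReal.coe_nonneg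

theorem exists_zeroAtInfty_of_tendsto {E : Type*} [NormedAddCommGroup E] {f : ℝ → E}
    (hf : ContinuousOn f (Set.Ici 0)) (hlim : Tendsto f atTop (𝓝 0)) :
    ∃ F : C₀(ℝ≥0, E), ∀ t, F t = f t :=
  ⟨⟨⟨_, continuous_nnreal_of_continuousOn_Ici hf⟩, by
    rw [cocompact_eq_atTop]
    exact hlim.comp (NNReal.tendsto_coe_atTop.2 tendsto_id)⟩, fun _ ↦ rfl⟩

theorem exists_boundedContinuous_forcing {C M : ℝ} {K : ℝ → V →L[ℝ] W} {g : ℝ → V} (hα : 0 < α)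
    (hKc : ContinuousOn K (Set.Ici 0)) (hK : ∀ r ≥ 0, ‖K r‖ ≤ C) (hgc : ContinuousOn g (Set.Ici 0))
    (hg : ∀ t ≥ 0, t ^ (1 - α) * ∫ τ in (0 : ℝ)..t, (t - τ) ^ (α - 1) * ‖K (t - τ) (g τ)‖ ≤ M)
    (x₀ : V) :
    ∃ h : ℝ≥0 →ᵇ W,
      ∀ t, h t = K t x₀ + scaledConvolution α 1 (fun r ↦ K r) (fun s ↦ g s) t := by
  have hKc' := continuous_nnreal_of_continuousOn_Ici hKc
  have hcont := (hKc'.clm_apply (continuous_const (y := x₀))).add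
    (continuous_scaledConvolution hα one_pos hKc' (continuous_nnreal_of_continuousOn_Ici hgc))
  refine ⟨.ofNormedAddCommGroup _ hcont (C * ‖x₀‖ + |M|) fun t ↦ ?_, fun _ ↦ rfl⟩
  refine (norm_add_le _ _).trans (add_le_add ((K t).le_of_opNorm_le (hK t t.coe_nonneg) x₀) ?_)
  rcases eq_zero_or_pos t with rfl | ht
  · simp [scaledConvolution_zero_right]
  · exact (norm_scaledConvolution_one_le ht K g).trans ((hg t t.coe_nonneg).trans (le_abs_self M))

theorem exists_forall_eq_variationOfConstants_iff [CompleteSpace V] {C M : ℝ}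
    {K Q : ℝ → V →L[ℝ] V} {g : ℝ → V} (hα0 : 0 < α) (hα1 : α ≤ 1)
    (hKc : ContinuousOn K (Set.Ici 0)) (hK : ∀ r ≥ 0, ‖K r‖ ≤ C / (1 + r ^ α) ^ 2)
    (hQc : ContinuousOn Q (Set.Ici 0)) (hQ : Tendsto Q atTop (𝓝 0))
    (hgc : ContinuousOn g (Set.Ici 0))
    (hg : ∀ t ≥ 0, t ^ (1 - α) * ∫ τ in (0 : ℝ)..t, (t - τ) ^ (α - 1) * ‖K (t - τ) (g τ)‖ ≤ M)
    (x₀ : V) :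
    ∃ z : ℝ≥0 →ᵇ V, ∀ (y : ℝ≥0 →ᵇ V) (φ : ℝ → V),
      (∀ s : ℝ≥0, 0 < s → y s = (s : ℝ) ^ (1 - α) • φ s) →
        ((∀ t > 0, φ t = variationOfConstants α K Q g x₀ φ t) ↔ y = z) := by
  have hC : 0 ≤ C := by
    simpa [Real.zero_rpow hα0.ne'] using (norm_nonneg _).trans (hK 0 le_rfl)
  have hKC : ∀ r ≥ 0, ‖K r‖ ≤ C := fun r hr ↦ (hK r hr).trans (div_le_self hC (one_le_pow₀
    (le_add_of_nonneg_right (Real.rpow_nonneg hr α))))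
  obtain ⟨Q₀, hQ₀⟩ := exists_zeroAtInfty_of_tendsto hQc hQ
  obtain ⟨h, hh⟩ := exists_boundedContinuous_forcing hα0 hKc hKC hgc hg x₀
  have hKc' := continuous_nnreal_of_continuousOn_Ici hKc
  obtain ⟨z, hz, hunique⟩ := existsUnique_eq_add_scaledConvolution hα0 hα1 hC hKc'
    (fun r ↦ hK r r.coe_nonneg) Q₀ h
  refine ⟨z, fun y φ hy ↦ ?_⟩
  have hscale : ∀ t : ℝ≥0, 0 < t → (φ t = variationOfConstants α K Q g x₀ φ t ↔
      y t = h t + scaledConvolution α α (fun r ↦ K r) (fun s ↦ Q₀ s (y s)) t) := fun t ht ↦ by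
    simp only [hQ₀, hh]
    rw [← rpow_smul_variationOfConstants ht K Q g x₀ hy, hy t ht,
      (smul_right_injective V (Real.rpow_pos_of_pos (NNReal.coe_pos.2 ht) _).ne').eq_iff]
  have hcont : Continuous fun t ↦
      h t + scaledConvolution α α (fun r ↦ K r) (fun s ↦ Q₀ s (y s)) t :=
    h.continuous.add (continuous_scaledConvolution hα0 hα0 hKc'
      ((map_continuous Q₀).clm_apply y.continuous))
  constructor
  · intro hφ
    refine hunique y (congr_fun (Continuous.ext_on (dense_compl_singleton 0) y.continuous hcont
      fun s hs ↦ ?_))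
    have hs0 : 0 < s := pos_iff_ne_zero.2 hs
    exact (hscale s hs0).1 (hφ s (NNReal.coe_pos.2 hs0))
  · rintro rfl t ht
    lift t to ℝ≥0 using ht.le
    exact (hscale t (NNReal.coe_pos.1 ht)).2 (hz t)

end VariationOfConstants

section WeightedContinuous

open scoped NNReal BoundedContinuousFunction

variable {α : ℝ} {s : ℕ}

theorem continuous_update_nnreal_zero {X : Type*} [TopologicalSpace X] {f : ℝ → X} {l : X}
    (hf : ContinuousOn f (Set.Ioi 0)) (hl : Tendsto f (𝓝[>] 0) (𝓝 l)) :
    Continuous (Function.update (fun t : ℝ≥0 ↦ f t) 0 l) := by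
  refine continuous_iff_continuousAt.2 fun t ↦ ?_
  rcases eq_or_ne t 0 with rfl | ht
  · have hcompl : ({0}ᶜ : Set ℝ≥0) = Set.Ioi 0 := by
      ext
      simp [pos_iff_ne_zero]
    rw [continuousAt_update_same, hcompl]
    exact hl.comp (NNReal.map_coe_nhdsGT 0).le
  · rw [continuousAt_update_of_ne ht]
    exact (hf.continuousAt (Ioi_mem_nhds (NNReal.coe_pos.2 (pos_iff_ne_zero.2 ht)))).comp
      NNReal.continuous_coe.continuousAt

theorem exists_boundedContinuous_of_memC0inf {x : ℝ → Fin s → ℝ} (hα : α ≤ 1)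
    (hx : memC0inf α x) :
    ∃ z : ℝ≥0 →ᵇ (Fin s → ℝ), ∀ t : ℝ≥0, 0 < t → z t = (t : ℝ) ^ (1 - α) • x t := by
  obtain ⟨hxc, ⟨l, hl⟩, C, hC⟩ := hx
  have hcont := continuous_update_nnreal_zero (f := fun t ↦ t ^ (1 - α) • x t)
    ((Real.continuous_rpow_const (sub_nonneg.2 hα)).continuousOn.smul hxc) hl
  refine ⟨.ofNormedAddCommGroup _ hcont (max ‖l‖ C) fun t ↦ ?_, fun t ht ↦ by
    simp [ht.ne']⟩
  rcases eq_or_ne t 0 with rfl | ht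
  · simp
  · rw [Function.update_of_ne ht, norm_smul, Real.norm_of_nonneg (by positivity)]
    exact (hC t t.coe_nonneg).trans (le_max_right _ _)

theorem memC0inf_rpow_smul (hα : α < 1) (z : ℝ≥0 →ᵇ (Fin s → ℝ)) :
    memC0inf α fun t ↦ t ^ (α - 1) • z t.toNNReal := by
  have hcancel : ∀ t : ℝ, 0 < t → t ^ (1 - α) • t ^ (α - 1) • z t.toNNReal = z t.toNNReal :=
    fun t ht ↦ by rw [smul_smul, rpow_one_sub_mul_rpow_sub_one ht, one_smul]
  have hz : Continuous fun t : ℝ ↦ z t.toNNReal := z.continuous.comp continuous_real_toNNReal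
  have hpow : ContinuousOn (fun t : ℝ ↦ t ^ (α - 1)) (Set.Ioi 0) := fun t ht ↦
    (Real.continuousAt_rpow_const t _ (.inl ht.ne')).continuousWithinAt
  refine ⟨hpow.smul hz.continuousOn, ⟨z (0 : ℝ).toNNReal, ?_⟩, ‖z‖, fun t ht ↦ ?_⟩
  · refine (hz.continuousWithinAt (s := Set.Ioi 0)).congr' ?_
    filter_upwards [self_mem_nhdsWithin] with t ht using (hcancel t ht).symm
  · rcases ht.eq_or_lt with rfl | ht
    · simp [Real.zero_rpow (sub_pos.2 hα).ne']
    · rw [← Real.norm_of_nonneg (Real.rpow_nonneg ht.le (1 - α)), ← norm_smul, hcancel t ht]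
      exact z.norm_coe_le_norm _

theorem tendsto_zero_of_memC0inf {x : ℝ → Fin s → ℝ} (hα : α < 1) (hx : memC0inf α x) :
    Tendsto x atTop (𝓝 0) := by
  obtain ⟨-, -, C, hC⟩ := hx
  have hlim : Tendsto (fun t : ℝ ↦ C * t ^ (-(1 - α))) atTop (𝓝 0) := by
    simpa using (tendsto_rpow_neg_atTop (sub_pos.2 hα)).const_mul C
  refine squeeze_zero_norm' ?_ hlim
  filter_upwards [eventually_gt_atTop 0] with t ht
  rw [Real.rpow_neg ht.le, ← div_eq_mul_inv, le_div_iff₀ (Real.rpow_pos_of_pos ht _), mul_comm]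
  exact hC t ht.le

end WeightedContinuous

section MatrixMittagLeffler

attribute [local instance] Matrix.linftyOpNormedAlgebra

variable {α : ℝ} {s : ℕ}

theorem norm_map_algebraMap_complex {m n : Type*} [Fintype m] [Fintype n] (B : Matrix m n ℝ) :
    ‖B.map (algebraMap ℝ ℂ)‖ = ‖B‖ := by
  simp [Matrix.linfty_opNorm_def]

theorem map_ML_algebraMap_complex (hα : 0 < α) (β : ℝ) (B : Matrix (Fin s) (Fin s) ℝ) :
    (ML α β B).map (algebraMap ℝ ℂ) = mittagLeffler α β (B.map (algebraMap ℝ ℂ)) := by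
  have hcont : Continuous ((algebraMap ℝ ℂ).mapMatrix (m := Fin s)) :=
    continuous_id.matrix_map Complex.continuous_ofReal
  exact map_mittagLeffler hα β _ hcont B

theorem exists_norm_ML_rpow_smul_le (hα0 : 0 < α) (hα1 : α < 1) {A : Matrix (Fin s) (Fin s) ℝ}
    (hspec : ∀ μ ∈ spectrum ℂ (A.map (algebraMap ℝ ℂ)),
      μ ≠ 0 ∧ α * Real.pi / 2 < |Complex.arg μ|) :
    ∃ C, ∀ r ≥ 0, ‖ML α α (r ^ α • A)‖ ≤ C / (1 + r ^ α) ^ 2 := by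
  obtain ⟨C, hC⟩ := exists_norm_mittagLeffler_rpow_smul_le hα0 hα1 hspec
  refine ⟨C, fun r hr ↦ ?_⟩
  have hmap : (r ^ α • A).map (algebraMap ℝ ℂ) = r ^ α • A.map (algebraMap ℝ ℂ) := by
    ext; simp
  rw [← norm_map_algebraMap_complex, map_ML_algebraMap_complex hα0, hmap]
  exact hC r hr

theorem continuous_ML_rpow_smul (hα : 0 < α) (β : ℝ) (A : Matrix (Fin s) (Fin s) ℝ) :
    Continuous fun r : ℝ ↦ ML α β (r ^ α • A) :=
  (continuous_mittagLeffler hα β).comp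
    ((Real.continuous_rpow_const hα.le).smul (continuous_const (y := A)))

variable {n : Type*} [Fintype n] [DecidableEq n]

/-- The action of square matrices on vectors as a map into the continuous linear endomorphisms. -/
noncomputable def mulVecCLM : Matrix n n ℝ →ₗ[ℝ] (n → ℝ) →L[ℝ] (n → ℝ) :=
  LinearMap.toContinuousLinearMap.toLinearMap ∘ₗ Matrix.toLin'.toLinearMap

theorem mulVecCLM_apply (B : Matrix n n ℝ) (v : n → ℝ) :
    mulVecCLM B v = B.mulVec v :=
  rfl

theorem norm_mulVecCLM_le (B : Matrix n n ℝ) : ‖mulVecCLM B‖ ≤ ‖B‖ :=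
  ContinuousLinearMap.opNorm_le_bound _ (norm_nonneg B) (Matrix.linfty_opNorm_mulVec B)

theorem continuous_mulVecCLM : Continuous (mulVecCLM (n := n)) :=
  mulVecCLM.continuous_of_finiteDimensional

end MatrixMittagLeffler

theorem stmt13 (α : ℝ) (hα0 : 0 < α) (hα1 : α < 1) (s : ℕ)
    (A : Matrix (Fin s) (Fin s) ℝ)
    (hspec : ∀ μ ∈ spectrum ℂ (A.map (algebraMap ℝ ℂ)),
      μ ≠ 0 ∧ α * Real.pi / 2 < |Complex.arg μ|)
    (Q : ℝ → Matrix (Fin s) (Fin s) ℝ) (hQc : ContinuousOn Q (Set.Ici 0))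
    (hQdecay : Tendsto (fun t : ℝ => ‖Q t‖) atTop (𝓝 0))
    (g : ℝ → (Fin s → ℝ)) (hgc : ContinuousOn g (Set.Ici 0))
    (hgint : ∃ C : ℝ, ∀ t : ℝ, 0 ≤ t →
      t ^ (1 - α) * ∫ τ in (0:ℝ)..t,
        (t - τ) ^ (α - 1) * ‖(ML α α ((t - τ) ^ α • A)).mulVec (g τ)‖ ≤ C) :
    ∀ x₀ : Fin s → ℝ, ∃ φ : ℝ → (Fin s → ℝ),
      memC0inf α φ ∧
      (∀ t > (0:ℝ),
        φ t = t ^ (α - 1) • (ML α α (t ^ α • A)).mulVec x₀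
          + (∫ τ in (0:ℝ)..t, (t - τ) ^ (α - 1) •
              (ML α α ((t - τ) ^ α • A) * Q τ).mulVec (φ τ))
          + ∫ τ in (0:ℝ)..t, (t - τ) ^ (α - 1) •
              (ML α α ((t - τ) ^ α • A)).mulVec (g τ)) ∧
      (∀ ψ : ℝ → (Fin s → ℝ), memC0inf α ψ →
        (∀ t > (0:ℝ),
          ψ t = t ^ (α - 1) • (ML α α (t ^ α • A)).mulVec x₀
            + (∫ τ in (0:ℝ)..t, (t - τ) ^ (α - 1) •
                (ML α α ((t - τ) ^ α • A) * Q τ).mulVec (ψ τ))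
            + ∫ τ in (0:ℝ)..t, (t - τ) ^ (α - 1) •
                (ML α α ((t - τ) ^ α • A)).mulVec (g τ)) →
        ∀ t > (0:ℝ), ψ t = φ t) ∧
      Tendsto φ atTop (𝓝 0) := by
  intro x₀
  obtain ⟨C, hC⟩ := exists_norm_ML_rpow_smul_le hα0 hα1 hspec
  obtain ⟨M, hM⟩ := hgint
  have hQ : Tendsto (fun t ↦ mulVecCLM (Q t)) atTop (𝓝 0) :=
    squeeze_zero_norm (fun t ↦ norm_mulVecCLM_le (Q t)) hQdecay
  obtain ⟨z, hz⟩ := exists_forall_eq_variationOfConstants_iff hα0 hα1.le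
    (continuous_mulVecCLM.comp (continuous_ML_rpow_smul hα0 α A)).continuousOn
    (fun r hr ↦ (norm_mulVecCLM_le _).trans (hC r hr))
    (continuous_mulVecCLM.comp_continuousOn hQc) hQ hgc hM x₀
  simp only [variationOfConstants, Function.comp_apply, mulVecCLM_apply, Matrix.mulVec_mulVec]
    at hz
  have hφ := memC0inf_rpow_smul hα1 z
  refine ⟨_, hφ, (hz z _ fun t ht ↦ ?_).2 rfl, fun ψ hψ hψ_eq t ht ↦ ?_,
    tendsto_zero_of_memC0inf hα1 hφ⟩
  · rw [smul_smul, rpow_one_sub_mul_rpow_sub_one (NNReal.coe_pos.2 ht), one_smul, Real.toNNReal_coe]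
  · obtain ⟨y, hy⟩ := exists_boundedContinuous_of_memC0inf hα1.le hψ
    lift t to NNReal using ht.le
    have hyz := (hz y ψ hy).1 hψ_eq
    simp only [Real.toNNReal_coe]
    rw [← hyz, hy t ht, smul_smul, mul_comm, rpow_one_sub_mul_rpow_sub_one ht, one_smul]
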